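/- Let Ω ⊂ ℝ² be a bounded Lipschitz domain, and let (u_ε)_ε ⊂ W^{1,1}(Ω;ℝ²) be a sequence that is uniformly bounded in W^{1,1}(Ω;ℝ²), satisfies det ∇u_ε = 1 a.e. in Ω for all ε, and ‖∂₁u_ε‖_{L^∞(Ω;ℝ²)} ≤ C for a constant C independent of ε. If u_ε → u in L¹(Ω;ℝ²) for some u ∈ BV(Ω;ℝ²), then det ∇u = 1 a.e. in Ω, where ∇u denotes the approximate differential of u. -/

import Mathlib

open MeasureTheory Set Filter Topology
open scoped ENNReal

noncomputable section

/-- We identify `ℝ²` with maps `Fin 2 → ℝ`; `x 0` is the `x₁` coordinate and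
`x 1` the `x₂` coordinate. -/
abbrev V2 := Fin 2 → ℝ

/-- `2 × 2` real matrices. -/
abbrev Mat2 := Matrix (Fin 2) (Fin 2) ℝ

/-- Proper rotations: `SO(2) = {R : R Rᵀ = 1, det R = 1}`. -/
def SO2 : Set Mat2 := {R | R * R.transpose = 1 ∧ R.det = 1}

def e1 : V2 := ![1, 0]
def e2 : V2 := ![0, 1]

/-- Euclidean norm on `ℝ²`. -/
def vnorm (v : V2) : ℝ := Real.sqrt (v 0 ^ 2 + v 1 ^ 2)

/-- Frobenius norm on `2 × 2` matrices. -/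
def mnorm (M : Mat2) : ℝ := Real.sqrt (∑ i, ∑ j, M i j ^ 2)

/-- Euclidean inner product on `ℝ²`. -/
def dot (v w : V2) : ℝ := ∑ i, v i * w i

/-- Tensor (outer) product `a ⊗ b = a bᵀ` of two vectors. -/
def outer (a b : V2) : Mat2 := Matrix.of fun i j => a i * b j

/-- Identification of `ℝ²` with the Euclidean space `EuclideanSpace ℝ (Fin 2)`. -/
def vToE (v : V2) : EuclideanSpace ℝ (Fin 2) := (EuclideanSpace.equiv (Fin 2) ℝ).symm v

/-- Identification of `2×2` matrices with `EuclideanSpace ℝ (Fin 2 × Fin 2)`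
(so that the induced norm is the Frobenius norm). -/
def mToE (M : Mat2) : EuclideanSpace ℝ (Fin 2 × Fin 2) :=
  (EuclideanSpace.equiv (Fin 2 × Fin 2) ℝ).symm fun p => M p.1 p.2

/-- A vector-valued function of one real variable has bounded variation on `s`
(with respect to the Euclidean norm). -/
def BVv (ψ : ℝ → V2) (s : Set ℝ) : Prop := BoundedVariationOn (fun t => vToE (ψ t)) s

/-- A matrix-valued function of one real variable has bounded variation on `s`
(with respect to the Frobenius norm). -/
def BVm (R : ℝ → Mat2) (s : Set ℝ) : Prop := BoundedVariationOn (fun t => mToE (R t)) s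

/-- Componentwise (a.e. pointwise) derivative of a vector-valued function of one variable.
For a one-dimensional `BV` function, the classical derivative exists a.e. and coincides with
the density of the absolutely continuous part of its distributional derivative
(the approximate derivative). -/
def vecDeriv (ψ : ℝ → V2) (t : ℝ) : V2 := fun i => deriv (fun s => ψ s i) t

/-- Componentwise derivative of a matrix-valued function of one variable. -/
def mDeriv (R : ℝ → Mat2) (t : ℝ) : Mat2 := Matrix.of fun i j => deriv (fun s => R s i j) t

/-- The rigid layers `ε Y_rig = {x : Int.fract (x₂/ε) ∈ [λ, 1)}` (1-periodic extension of
`[0,1) × [λ,1)`, scaled by `ε`). -/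
def rigid2 (lam ε : ℝ) : Set V2 := {x | lam ≤ Int.fract (x 1 / ε)}

/-- The one-dimensional rigid layers `ε I_rig`, where `I_rig` is the 1-periodic extension
of `[λ, 1)`. -/
def rigid1 (lam ε : ℝ) : Set ℝ := {t | lam ≤ Int.fract (t / ε)}

/-- `a_Ω = inf_{x ∈ Ω} x₂`. -/
def aOm (Ω : Set V2) : ℝ := sInf ((fun x : V2 => x 1) '' Ω)

/-- `b_Ω = sup_{x ∈ Ω} x₂`. -/
def bOm (Ω : Set V2) : ℝ := sSup ((fun x : V2 => x 1) '' Ω)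

/-- `Ω` is `x₁`-connected: every horizontal slice is a (possibly empty) interval. -/
def X1Connected (Ω : Set V2) : Prop := ∀ t : ℝ, OrdConnected {s : ℝ | ![s, t] ∈ Ω}

/-- A (nonempty) bounded Lipschitz domain: near every boundary point, after a rotation,
`Ω` is the region above the graph of a Lipschitz function. -/
def IsLipschitzDomain (Ω : Set V2) : Prop :=
  IsOpen Ω ∧ Ω.Nonempty ∧ Bornology.IsBounded Ω ∧
    ∀ x ∈ frontier Ω, ∃ Q ∈ SO2, ∃ L : NNReal, ∃ f : ℝ → ℝ, ∃ r : ℝ, 0 < r ∧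
      LipschitzWith L f ∧ ∀ y ∈ Metric.ball x r, (y ∈ Ω ↔ f (Q.mulVec y 0) < Q.mulVec y 1)

/-- Partial derivative `∂_j φ` of a scalar test function. -/
def pd (j : Fin 2) (φ : V2 → ℝ) (x : V2) : ℝ := fderiv ℝ φ x (Pi.single j 1)

/-- Componentwise integrability of a matrix-valued map. -/
def IntegrableOnM (g : V2 → Mat2) (Ω : Set V2) : Prop :=
  ∀ i j, IntegrableOn (fun x => g x i j) Ω volume

/-- `u ∈ W^{1,1}(Ω;ℝ²)` with weak gradient `gu`, expressed through integration by parts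
against smooth compactly supported test functions. -/
structure IsSobolev11On (Ω : Set V2) (u : V2 → V2) (gu : V2 → Mat2) : Prop where
  int_u : IntegrableOn u Ω volume
  int_gu : IntegrableOnM gu Ω
  ibp : ∀ φ : V2 → ℝ, ContDiff ℝ (⊤ : ℕ∞) φ → HasCompactSupport φ → tsupport φ ⊆ Ω →
    ∀ i j, ∫ x in Ω, u x i * pd j φ x = - ∫ x in Ω, φ x * gu x i j

/-- `u ∈ BV(Ω;ℝ²)`, with distributional derivative `Du = gu · L² + gs · σ`.
Here `gu` is the approximate differential (density of the absolutely continuous part),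
`σ = |D^s u|` is the total variation measure of the singular part (a finite measure,
concentrated on `Ω` and singular with respect to Lebesgue measure), and `gs` is the
polar density of the singular part, of unit Frobenius norm `σ`-a.e. -/
structure HasBVDerivOn (Ω : Set V2) (u : V2 → V2) (gu : V2 → Mat2)
    (σ : Measure V2) (gs : V2 → Mat2) : Prop where
  int_u : IntegrableOn u Ω volume
  int_gu : IntegrableOnM gu Ω
  fin : σ Set.univ ≠ ⊤
  conc : σ Ωᶜ = 0
  perp : σ ⟂ₘ (volume : Measure V2)
  meas_gs : ∀ i j, AEMeasurable (fun x => gs x i j) σ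
  unit : ∀ᵐ x ∂σ, mnorm (gs x) = 1
  ibp : ∀ φ : V2 → ℝ, ContDiff ℝ (⊤ : ℕ∞) φ → HasCompactSupport φ → tsupport φ ⊆ Ω →
    ∀ i j, ∫ x in Ω, u x i * pd j φ x
        = (- ∫ x in Ω, φ x * gu x i j) - ∫ x, φ x * gs x i j ∂σ

/-- `L¹(Ω;ℝ²)` convergence of a sequence. -/
def L1ConvOn (Ω : Set V2) (un : ℕ → V2 → V2) (u : V2 → V2) : Prop :=
  Tendsto (fun n => ∫ x in Ω, vnorm (un n x - u x)) atTop (𝓝 0)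

/-- Weak* convergence of the measures `gn n · L²∟Ω` to `gu · L²∟Ω + gs · σ`
in `M(Ω; ℝ^{2×2})`, tested against continuous functions compactly supported in `Ω`. -/
def MeasConv (Ω : Set V2) (gn : ℕ → V2 → Mat2) (gu : V2 → Mat2)
    (σ : Measure V2) (gs : V2 → Mat2) : Prop :=
  ∀ φ : V2 → ℝ, Continuous φ → HasCompactSupport φ → tsupport φ ⊆ Ω → ∀ i j,
    Tendsto (fun n => ∫ x in Ω, φ x * gn n x i j) atTop
      (𝓝 ((∫ x in Ω, φ x * gu x i j) + ∫ x, φ x * gs x i j ∂σ))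

/-- Weak* convergence in `BV(Ω;ℝ²)` of a sequence of `W^{1,1}` maps to a `BV` limit:
`L¹` convergence together with weak* convergence of the derivative measures. -/
def WeakStarToBV (Ω : Set V2) (un : ℕ → V2 → V2) (u : V2 → V2) : Prop :=
  ∃ gu σ gs, HasBVDerivOn Ω u gu σ gs ∧ L1ConvOn Ω un u ∧
    ∀ gn : ℕ → V2 → Mat2, (∀ n, IsSobolev11On Ω (un n) (gn n)) → MeasConv Ω gn gu σ gs

/-- `u ∈ A_ε`, witnessed by the data `R ∈ L^∞(Ω;SO(2))` and `γ ∈ L¹(Ω)`: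
`u ∈ W^{1,1}(Ω;ℝ²)` with `∇u = R (I + γ e₁⊗e₂)` a.e. and `γ = 0` a.e. on `εY_rig ∩ Ω`. -/
structure MemAeps (Ω : Set V2) (lam ε : ℝ) (u : V2 → V2)
    (R : V2 → Mat2) (γ : V2 → ℝ) : Prop where
  so2 : ∀ᵐ x ∂(volume.restrict Ω), R x ∈ SO2
  int_γ : IntegrableOn γ Ω volume
  sob : IsSobolev11On Ω u fun x => R x * (1 + γ x • outer e1 e2)
  rig : ∀ᵐ x ∂(volume.restrict (Ω ∩ rigid2 lam ε)), γ x = 0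

/-- The elastoplastic energy `E_ε(u) = ∫_Ω |γ| dx` for `u ∈ A_ε`, `∞` otherwise,
as an `ℝ≥0∞`-valued functional (the decomposition data is essentially unique). -/
def Eeps (Ω : Set V2) (lam ε : ℝ) (u : V2 → V2) : ℝ≥0∞ :=
  sInf {c | ∃ R γ, MemAeps Ω lam ε u R γ ∧ c = ∫⁻ x in Ω, ENNReal.ofReal |γ x|}

/-- `u ∈ A` relative to the vertical interval `(a, b)`:
`u ∈ BV(Ω;ℝ²)` with `u(x) = R(x₂)x + ψ(x₂)` a.e., `R ∈ BV(a,b;SO(2))`,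
`ψ ∈ BV(a,b;ℝ²)` and `det ∇u = 1` a.e. in `Ω`. -/
def memAOn (Ω : Set V2) (a b : ℝ) (u : V2 → V2) : Prop :=
  ∃ gu σ gs, HasBVDerivOn Ω u gu σ gs ∧
    (∃ R : ℝ → Mat2, ∃ ψ : ℝ → V2, (∀ t ∈ Ioo a b, R t ∈ SO2) ∧
      BVm R (Ioo a b) ∧ BVv ψ (Ioo a b) ∧
      ∀ᵐ x ∂(volume.restrict Ω), u x = (R (x 1)).mulVec x + ψ (x 1)) ∧
    ∀ᵐ x ∂(volume.restrict Ω), (gu x).det = 1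

/-- `u ∈ A`. -/
def memA (Ω : Set V2) (u : V2 → V2) : Prop := memAOn Ω (aOm Ω) (bOm Ω) u

/-- `u ∈ A∥` relative to the vertical interval `(a,b)`:
`u(x) = Rx + ϑ(x₂) R e₁ + c` a.e. with a constant rotation `R ∈ SO(2)`,
`ϑ ∈ BV(a,b)` and `c ∈ ℝ²`. -/
def memAparOn (Ω : Set V2) (a b : ℝ) (u : V2 → V2) : Prop :=
  ∃ R ∈ SO2, ∃ ϑ : ℝ → ℝ, ∃ c : V2, BoundedVariationOn ϑ (Ioo a b) ∧
    ∀ᵐ x ∂(volume.restrict Ω), u x = R.mulVec x + ϑ (x 1) • R.mulVec e1 + c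

/-- `u ∈ A∥`. -/
def memApar (Ω : Set V2) (u : V2 → V2) : Prop := memAparOn Ω (aOm Ω) (bOm Ω) u

/-- The limit energy `E(u) = ∫_Ω |ψ'·Re₁| dx + |D^s u|(Ω)` for `u ∈ A`, `∞` otherwise. -/
def Efun (Ω : Set V2) (u : V2 → V2) : ℝ≥0∞ :=
  sInf {c | ∃ gu σ gs, HasBVDerivOn Ω u gu σ gs ∧
    ∃ R : ℝ → Mat2, ∃ ψ : ℝ → V2,
      (∀ t ∈ Ioo (aOm Ω) (bOm Ω), R t ∈ SO2) ∧ BVm R (Ioo (aOm Ω) (bOm Ω)) ∧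
      BVv ψ (Ioo (aOm Ω) (bOm Ω)) ∧
      (∀ᵐ x ∂(volume.restrict Ω), u x = (R (x 1)).mulVec x + ψ (x 1)) ∧
      (∀ᵐ x ∂(volume.restrict Ω), (gu x).det = 1) ∧
      c = (∫⁻ x in Ω, ENNReal.ofReal |dot (vecDeriv ψ (x 1)) ((R (x 1)).mulVec e1)|)
          + σ Set.univ}

/-- The limit energy on `A∥`: `E(u) = ∫_Ω |ϑ'(x₂)| dx + |D^s u|(Ω)` for `u ∈ A∥`,
`∞` otherwise. -/
def EparFun (Ω : Set V2) (u : V2 → V2) : ℝ≥0∞ :=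
  sInf {c | ∃ gu σ gs, HasBVDerivOn Ω u gu σ gs ∧
    ∃ R ∈ SO2, ∃ ϑ : ℝ → ℝ, ∃ c0 : V2, BoundedVariationOn ϑ (Ioo (aOm Ω) (bOm Ω)) ∧
      (∀ᵐ x ∂(volume.restrict Ω), u x = R.mulVec x + ϑ (x 1) • R.mulVec e1 + c0) ∧
      c = (∫⁻ x in Ω, ENNReal.ofReal |deriv ϑ (x 1)|) + σ Set.univ}

/-- The regularized limit energy `E^δ(u) = ∫_Ω |ϑ'| dx + |D^s u|(Ω) + δ|Ω|` on `A∥`,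
`∞` otherwise. -/
def EDelta (Ω : Set V2) (δ : ℝ) (u : V2 → V2) : ℝ≥0∞ :=
  EparFun Ω u + ENNReal.ofReal δ * volume Ω

/-- `‖v‖_{W^{1,p}(Ω;ℝ²)}^p = ∫_Ω |v|^p + ∫_Ω |Dv|^p` for a map `v` with weak Jacobian `G`. -/
def Wp1 (p : ℝ) (Ω : Set V2) (v : V2 → V2) (G : V2 → Mat2) : ℝ≥0∞ :=
  (∫⁻ x in Ω, ENNReal.ofReal (vnorm (v x) ^ p)) + ∫⁻ x in Ω, ENNReal.ofReal (mnorm (G x) ^ p)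

/-- The regularized energy
`E^δ_ε(u) = ∫_Ω |γ| dx + δ ‖∂₁ u‖_{W^{1,p}(Ω;ℝ²)}^p` for `u ∈ A_ε` with
`∂₁u = R e₁ ∈ W^{1,p}(Ω;ℝ²)`, and `∞` otherwise. -/
def EepsDelta (Ω : Set V2) (lam ε δ p : ℝ) (u : V2 → V2) : ℝ≥0∞ :=
  sInf {c | ∃ R γ, MemAeps Ω lam ε u R γ ∧
    ∃ G : V2 → Mat2, IsSobolev11On Ω (fun x => (R x).mulVec e1) G ∧
      c = (∫⁻ x in Ω, ENNReal.ofReal |γ x|) +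
          ENNReal.ofReal δ * Wp1 p Ω (fun x => (R x).mulVec e1) G}

/-- `x` is an approximate jump point of `u`, with one-sided approximate limits `a ≠ b`
relative to a unit normal `ν`. -/
def JumpPt (u : V2 → V2) (x : V2) : Prop :=
  ∃ a b ν : V2, a ≠ b ∧ vnorm ν = 1 ∧
    Tendsto (fun r : ℝ =>
        (∫⁻ z in {z | z ∈ Metric.ball x r ∧ 0 < dot (z - x) ν},
            ENNReal.ofReal (vnorm (u z - a))) / volume (Metric.ball x r))
      (𝓝[>] 0) (𝓝 0) ∧
    Tendsto (fun r : ℝ =>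
        (∫⁻ z in {z | z ∈ Metric.ball x r ∧ dot (z - x) ν < 0},
            ENNReal.ofReal (vnorm (u z - b))) / volume (Metric.ball x r))
      (𝓝[>] 0) (𝓝 0)

/-- The jump set `J_u` of `u` in `Ω`. -/
def jumpSet (Ω : Set V2) (u : V2 → V2) : Set V2 := {x ∈ Ω | JumpPt u x}

/-- `u ∈ SBV_∞(Ω;ℝ²)`: `u ∈ BV` with singular part concentrated on the jump set
(no Cantor part), `∇u ∈ L^∞(Ω;ℝ^{2×2})` and `H¹(J_u) < ∞`. -/
def memSBVinf (Ω : Set V2) (u : V2 → V2) : Prop :=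
  ∃ gu σ gs, HasBVDerivOn Ω u gu σ gs ∧
    σ {x | ¬ JumpPt u x} = 0 ∧
    (∃ M : ℝ, ∀ᵐ x ∂(volume.restrict Ω), mnorm (gu x) ≤ M) ∧
    Measure.hausdorffMeasure (1 : ℝ) (jumpSet Ω u) ≠ ⊤

/-- Piecewise constant functions on `(a,b)` with finitely many jumps
(the class `PC(a,b)`). -/
def PCOn {α : Type*} (a b : ℝ) (f : ℝ → α) : Prop :=
  ∃ S : Finset ℝ, ∀ s₁ ∈ Ioo a b, ∀ s₂ ∈ Ioo a b, s₁ ≤ s₂ →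
    (∀ r ∈ S, r ∉ Icc s₁ s₂) → f s₁ = f s₂

/-- Piecewise Lipschitz functions on `(a,b)` with finitely many jump points:
the class `SBV_∞(a,b;ℝ²)` of one-dimensional special functions of bounded variation
with bounded derivative and finitely many jumps. -/
def PLipOn (a b : ℝ) (f : ℝ → V2) : Prop :=
  ∃ S : Finset ℝ, ∃ L : ℝ, 0 ≤ L ∧ ∀ s₁ ∈ Ioo a b, ∀ s₂ ∈ Ioo a b, s₁ ≤ s₂ →
    (∀ r ∈ S, r ∉ Icc s₁ s₂) → vnorm (f s₂ - f s₁) ≤ L * (s₂ - s₁)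

/-- The rectangle `Ω = (0,1) × (−1,1)`. -/
def Rect : Set V2 := {x | x 0 ∈ Ioo (0:ℝ) 1 ∧ x 1 ∈ Ioo (-1:ℝ) 1}

/-- `f ∈ W^{1,1}(a,b)`: `f` has an integrable weak derivative on `(a,b)`
(absolutely continuous representative). -/
def IsW11On (f : ℝ → ℝ) (a b : ℝ) : Prop :=
  ∃ g : ℝ → ℝ, IntegrableOn g (Ioo a b) volume ∧
    ∀ s ∈ Ioo a b, ∀ t ∈ Ioo a b, f t - f s = ∫ r in s..t, g r

lemma box_lintegral (x : V2) (r : ℝ) (F : V2 → ℝ≥0∞) (hF : Measurable F) :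
    ∫⁻ p in Metric.closedBall x r, F p =
      ∫⁻ a in Metric.closedBall (x 0) r, ∫⁻ b in Metric.closedBall (x 1) r, F ![a, b] := by
  by_cases hr : r < 0
  · simp [Metric.closedBall_eq_empty.2 hr]
  push Not at hr
  have hset : Metric.closedBall x r = MeasurableEquiv.finTwoArrow ⁻¹'
      ((Metric.closedBall (x 0) r) ×ˢ (Metric.closedBall (x 1) r)) := by
    ext y
    simp [dist_pi_le_iff hr, MeasurableEquiv.finTwoArrow, Fin.forall_fin_two]
  have hmp := volume_preserving_finTwoArrow ℝ
  have h1 : ∫⁻ p in Metric.closedBall x r, F p =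
      ∫⁻ q in (Metric.closedBall (x 0) r) ×ˢ (Metric.closedBall (x 1) r), F ![q.1, q.2] := by
    rw [hset, ← hmp.setLIntegral_comp_preimage_emb (MeasurableEquiv.measurableEmbedding _)]
    congr 1
    ext y
    congr 1
    ext i; fin_cases i <;> rfl
  rw [h1, Measure.volume_eq_prod, ← Measure.prod_restrict, lintegral_prod]
  apply Measurable.aemeasurable
  apply hF.comp
  rw [measurable_pi_iff]
  intro i; fin_cases i
  · exact measurable_fst
  · exact measurable_snd

lemma box_lintegral' (x : V2) (r : ℝ) (F : V2 → ℝ≥0∞) (hF : Measurable F) :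
    ∫⁻ p in Metric.closedBall x r, F p =
      ∫⁻ b in Metric.closedBall (x 1) r, ∫⁻ a in Metric.closedBall (x 0) r, F ![a, b] := by
  rw [box_lintegral x r F hF]
  apply lintegral_lintegral_swap
  apply Measurable.aemeasurable
  apply hF.comp
  rw [measurable_pi_iff]
  intro i; fin_cases i
  · exact measurable_fst
  · exact measurable_snd

lemma mem_box {x : V2} {r a b : ℝ} (ha : a ∈ Metric.closedBall (x 0) r)
    (hb : b ∈ Metric.closedBall (x 1) r) : ![a, b] ∈ Metric.closedBall x r := by
  have hr : 0 ≤ r := le_trans dist_nonneg ha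
  rw [Metric.mem_closedBall, dist_pi_le_iff hr]
  simpa [Fin.forall_fin_two] using ⟨ha, hb⟩

lemma mem_box_fst {x p : V2} {r : ℝ} (hp : p ∈ Metric.closedBall x r) (i : Fin 2) :
    p i ∈ Metric.closedBall (x i) r := by
  have hr : 0 ≤ r := le_trans dist_nonneg hp
  rw [Metric.mem_closedBall, dist_pi_le_iff hr] at hp
  exact hp i

lemma hasDerivAt_fst {H : V2 → ℝ} (hH : ContDiff ℝ 1 H) (a b : ℝ) :
    HasDerivAt (fun s => H ![s, b]) (pd 0 H ![a, b]) a := by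
  have h1 := (hH.differentiable one_ne_zero ![a, b]).hasFDerivAt
  have h2 : HasDerivAt (fun s : ℝ => (![s, b] : V2)) (Pi.single 0 1) a := by
    rw [hasDerivAt_pi]
    intro i; fin_cases i
    · simpa using hasDerivAt_id' a
    · simpa using hasDerivAt_const a b
  exact h1.comp_hasDerivAt a h2

lemma hasDerivAt_snd {H : V2 → ℝ} (hH : ContDiff ℝ 1 H) (a b : ℝ) :
    HasDerivAt (fun s => H ![a, s]) (pd 1 H ![a, b]) b := by
  have h1 := (hH.differentiable one_ne_zero ![a, b]).hasFDerivAt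
  have h2 : HasDerivAt (fun s : ℝ => (![a, s] : V2)) (Pi.single 1 1) b := by
    rw [hasDerivAt_pi]
    intro i; fin_cases i
    · simpa using hasDerivAt_const b a
    · simpa using hasDerivAt_id' b
  exact h1.comp_hasDerivAt b h2

lemma continuous_pd {H : V2 → ℝ} (hH : ContDiff ℝ 1 H) (j : Fin 2) : Continuous (pd j H) := by
  unfold pd
  exact (hH.continuous_fderiv one_ne_zero).clm_apply continuous_const

lemma oneD_le {f f' : ℝ → ℝ} (hf : ∀ t, HasDerivAt f (f' t) t) (hc : Continuous f') {z r s t : ℝ}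
    (hs : s ∈ Metric.closedBall z r) (ht : t ∈ Metric.closedBall z r) :
    ‖f s - f t‖ₑ ≤ ∫⁻ τ in Metric.closedBall z r, ‖f' τ‖ₑ := by
  have h1 : f s - f t = ∫ τ in t..s, f' τ :=
    (intervalIntegral.integral_eq_sub_of_hasDerivAt (fun x _ => hf x)
      (hc.intervalIntegrable _ _)).symm
  rw [h1]
  have h2 : ‖∫ τ in t..s, f' τ‖ₑ = ‖∫ τ in uIoc t s, f' τ‖ₑ := by
    rw [← ofReal_norm, ← ofReal_norm, intervalIntegral.norm_intervalIntegral_eq]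
  rw [h2]
  refine (enorm_integral_le_lintegral_enorm _).trans (lintegral_mono_set ?_)
  rw [Real.closedBall_eq_Icc] at *
  exact uIoc_subset_uIcc.trans (uIcc_subset_Icc ht hs)

lemma poincare_smooth {H : V2 → ℝ} (hH : ContDiff ℝ 1 H) (x : V2) {r : ℝ} (hr : 0 ≤ r) :
    ∫⁻ p in Metric.closedBall x r, ∫⁻ q in Metric.closedBall x r, ‖H p - H q‖ₑ ≤
      ENNReal.ofReal (2 * r) ^ 3 * ((∫⁻ p in Metric.closedBall x r, ‖pd 0 H p‖ₑ) +
        ∫⁻ p in Metric.closedBall x r, ‖pd 1 H p‖ₑ) := by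
  have hm0 : Measurable fun p => ‖pd 0 H p‖ₑ := (continuous_pd hH 0).measurable.enorm
  have hm1 : Measurable fun p => ‖pd 1 H p‖ₑ := (continuous_pd hH 1).measurable.enorm
  set B := Metric.closedBall x r
  set I := Metric.closedBall (x 0) r
  set J := Metric.closedBall (x 1) r
  have hI : volume I = ENNReal.ofReal (2 * r) := Real.volume_closedBall _ _
  have hJ : volume J = ENNReal.ofReal (2 * r) := Real.volume_closedBall _ _
  have hB : volume B = ENNReal.ofReal (2 * r) ^ 2 := by
    simp [B, Real.volume_pi_closedBall x hr, ENNReal.ofReal_pow, hr]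
  set G0 : ℝ → ℝ≥0∞ := fun b => ∫⁻ s in I, ‖pd 0 H ![s, b]‖ₑ
  set G1 : ℝ → ℝ≥0∞ := fun a => ∫⁻ s in J, ‖pd 1 H ![a, s]‖ₑ
  have hvm : Measurable fun q : ℝ × ℝ => (![q.1, q.2] : V2) := by
    rw [measurable_pi_iff]
    intro i; fin_cases i
    · exact measurable_fst
    · exact measurable_snd
  have hG0m : Measurable G0 := by
    apply Measurable.lintegral_prod_left'
      (f := fun q : ℝ × ℝ => ‖pd 0 H ![q.1, q.2]‖ₑ) (hm0.comp hvm)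
  have hG0m2 : Measurable fun p : V2 => G0 (p 1) := hG0m.comp (measurable_pi_apply 1)
  have hG1m : Measurable G1 := by
    apply Measurable.lintegral_prod_right'
      (f := fun q : ℝ × ℝ => ‖pd 1 H ![q.1, q.2]‖ₑ) (hm1.comp hvm)
  have hG1m2 : Measurable fun p : V2 => G1 (p 0) := hG1m.comp (measurable_pi_apply 0)
  have key : ∀ p ∈ B, ∀ q ∈ B, ‖H p - H q‖ₑ ≤ G0 (p 1) + G1 (q 0) := by
    intro p hp q hq
    have e1 : p = ![p 0, p 1] := by ext i; fin_cases i <;> rfl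
    have e2 : q = ![q 0, q 1] := by ext i; fin_cases i <;> rfl
    have : H p - H q = (H ![p 0, p 1] - H ![q 0, p 1]) + (H ![q 0, p 1] - H ![q 0, q 1]) := by
      rw [← e1, ← e2]; ring
    rw [this]
    refine (enorm_add_le _ _).trans (add_le_add ?_ ?_)
    · exact oneD_le (fun t => hasDerivAt_fst hH t (p 1))
        ((continuous_pd hH 0).comp (by fun_prop)) (mem_box_fst hp 0) (mem_box_fst hq 0)
    · exact oneD_le (fun t => hasDerivAt_snd hH (q 0) t)
        ((continuous_pd hH 1).comp (by fun_prop)) (mem_box_fst hp 1) (mem_box_fst hq 1)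
  have s0 : ∫⁻ p in B, G0 (p 1) = ENNReal.ofReal (2 * r) * ∫⁻ p in B, ‖pd 0 H p‖ₑ := by
    rw [box_lintegral _ _ _ hG0m2, box_lintegral' _ _ _ hm0]
    simp only [Matrix.cons_val_one, Matrix.cons_val_zero, lintegral_const, Measure.restrict_apply,
      MeasurableSet.univ, univ_inter, hI, I, J, G0]
    rw [mul_comm]
  have s1 : ∫⁻ p in B, G1 (p 0) = ENNReal.ofReal (2 * r) * ∫⁻ p in B, ‖pd 1 H p‖ₑ := by
    rw [box_lintegral' _ _ _ hG1m2, box_lintegral _ _ _ hm1]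
    simp only [Matrix.cons_val_one, Matrix.cons_val_zero, lintegral_const, Measure.restrict_apply,
      MeasurableSet.univ, univ_inter, hI, I, J, G1]
    rw [mul_comm]; simp only [Real.volume_closedBall]
  calc ∫⁻ p in B, ∫⁻ q in B, ‖H p - H q‖ₑ
      ≤ ∫⁻ p in B, ∫⁻ q in B, (G0 (p 1) + G1 (q 0)) := by
        refine setLIntegral_mono' Metric.isClosed_closedBall.measurableSet fun p hp => ?_
        exact setLIntegral_mono' Metric.isClosed_closedBall.measurableSet fun q hq => key p hp q hq
    _ = ∫⁻ p in B, (ENNReal.ofReal (2 * r) ^ 2 * G0 (p 1) + ∫⁻ q in B, G1 (q 0)) := by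
        congr 1; ext p
        rw [lintegral_add_left measurable_const, lintegral_const, Measure.restrict_apply_univ, hB,
          mul_comm]
    _ = ENNReal.ofReal (2 * r) ^ 2 * (∫⁻ p in B, G0 (p 1)) +
          ENNReal.ofReal (2 * r) ^ 2 * ∫⁻ q in B, G1 (q 0) := by
        rw [lintegral_add_right _ measurable_const, lintegral_const_mul _
          hG0m2, lintegral_const, Measure.restrict_apply_univ, hB,
          mul_comm (∫⁻ q in B, G1 (q 0))]
    _ = _ := by rw [s0, s1]; ring

lemma sup_smooth {H : V2 → ℝ} (hH : ContDiff ℝ 1 H) (x : V2) {r C : ℝ} (hr : 0 < r)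
    (hC : ∀ p ∈ Metric.closedBall x r, |pd 0 H p| ≤ C) :
    4 * r ^ 2 * |H x| ≤ 8 * C * r ^ 3 + (∫ p in Metric.closedBall x r, |H p|)
      + 2 * r * ∫ p in Metric.closedBall x r, |pd 1 H p| := by
  have hm1 : Measurable fun p => ‖pd 1 H p‖ₑ := (continuous_pd hH 1).measurable.enorm
  have hmH : Measurable fun p => ‖H p‖ₑ := hH.continuous.measurable.enorm
  set B := Metric.closedBall x r with hBdef
  set I := Metric.closedBall (x 0) r
  set J := Metric.closedBall (x 1) r with hJdef
  have hxB : x ∈ B := Metric.mem_closedBall_self hr.le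
  have hC0 : 0 ≤ C := (abs_nonneg _).trans (hC x hxB)
  have hB : volume B = ENNReal.ofReal (2 * r) ^ 2 := by
    simp [B, Real.volume_pi_closedBall x hr.le, ENNReal.ofReal_pow, hr.le]
  set G1 : ℝ → ℝ≥0∞ := fun a => ∫⁻ s in J, ‖pd 1 H ![a, s]‖ₑ
  have hvm : Measurable fun q : ℝ × ℝ => (![q.1, q.2] : V2) := by
    rw [measurable_pi_iff]
    intro i; fin_cases i
    · exact measurable_fst
    · exact measurable_snd
  have hG1m : Measurable G1 := by
    apply Measurable.lintegral_prod_right'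
      (f := fun q : ℝ × ℝ => ‖pd 1 H ![q.1, q.2]‖ₑ) (hm1.comp hvm)
  have hG1m2 : Measurable fun p : V2 => G1 (p 0) := hG1m.comp (measurable_pi_apply 0)
  have key : ∀ q ∈ B, ‖H x‖ₑ ≤ ENNReal.ofReal C * ENNReal.ofReal (2 * r) + ‖H q‖ₑ + G1 (q 0) := by
    intro q hq
    have e1 : x = ![x 0, x 1] := by ext i; fin_cases i <;> rfl
    have e2 : q = ![q 0, q 1] := by ext i; fin_cases i <;> rfl
    have : H x = (H ![x 0, x 1] - H ![q 0, x 1]) + H q + (H ![q 0, x 1] - H ![q 0, q 1]) := by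
      rw [← e1, ← e2]; ring
    rw [this]
    refine (enorm_add_le _ _).trans (add_le_add ((enorm_add_le _ _).trans
      (add_le_add ?_ le_rfl)) ?_)
    · refine (oneD_le (fun t => hasDerivAt_fst hH t (x 1))
        ((continuous_pd hH 0).comp (by fun_prop)) (mem_box_fst hxB 0) (mem_box_fst hq 0)).trans ?_
      have : ∫⁻ τ in I, ‖pd 0 H ![τ, x 1]‖ₑ ≤ ∫⁻ τ in I, ENNReal.ofReal C := by
        refine setLIntegral_mono' Metric.isClosed_closedBall.measurableSet fun τ hτ => ?_
        rw [← ofReal_norm]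
        exact ENNReal.ofReal_le_ofReal (hC _ (mem_box hτ (mem_box_fst hxB 1)))
      refine this.trans (le_of_eq ?_)
      simp [I, Real.volume_closedBall]
    · exact oneD_le (fun t => hasDerivAt_snd hH (q 0) t)
        ((continuous_pd hH 1).comp (by fun_prop)) (mem_box_fst hxB 1) (mem_box_fst hq 1)
  have s1 : ∫⁻ p in B, G1 (p 0) = ENNReal.ofReal (2 * r) * ∫⁻ p in B, ‖pd 1 H p‖ₑ := by
    rw [box_lintegral' _ _ _ hG1m2, box_lintegral _ _ _ hm1]
    simp only [Matrix.cons_val_one, Matrix.cons_val_zero, lintegral_const, Measure.restrict_apply,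
      MeasurableSet.univ, univ_inter, I, J, G1]
    rw [mul_comm]; simp only [Real.volume_closedBall]
  have main : ENNReal.ofReal (2 * r) ^ 2 * ‖H x‖ₑ ≤
      ENNReal.ofReal (2 * r) ^ 2 * (ENNReal.ofReal C * ENNReal.ofReal (2 * r)) +
        (∫⁻ q in B, ‖H q‖ₑ) + ENNReal.ofReal (2 * r) * ∫⁻ p in B, ‖pd 1 H p‖ₑ := by
    calc ENNReal.ofReal (2 * r) ^ 2 * ‖H x‖ₑ = ∫⁻ q in B, ‖H x‖ₑ := by
          rw [lintegral_const, Measure.restrict_apply_univ, hB, mul_comm]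
      _ ≤ ∫⁻ q in B, (ENNReal.ofReal C * ENNReal.ofReal (2 * r) + ‖H q‖ₑ + G1 (q 0)) :=
          setLIntegral_mono' Metric.isClosed_closedBall.measurableSet fun q hq => key q hq
      _ = _ := by
          rw [lintegral_add_right _ hG1m2,
            lintegral_add_right _ hmH, s1, lintegral_const, Measure.restrict_apply_univ, hB,
            mul_comm (ENNReal.ofReal C * ENNReal.ofReal (2 * r))]
  have hBc : IsCompact B := isCompact_closedBall x r
  have i1 : IntegrableOn H B := hH.continuous.continuousOn.integrableOn_compact hBc
  have i2 : IntegrableOn (pd 1 H) B := (continuous_pd hH 1).continuousOn.integrableOn_compact hBc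
  have r1 : ∫⁻ q in B, ‖H q‖ₑ = ENNReal.ofReal (∫ q in B, |H q|) := by
    rw [← ofReal_integral_norm_eq_lintegral_enorm i1]; rfl
  have r2 : ∫⁻ q in B, ‖pd 1 H q‖ₑ = ENNReal.ofReal (∫ q in B, |pd 1 H q|) := by
    rw [← ofReal_integral_norm_eq_lintegral_enorm i2]; rfl
  have p1 : 0 ≤ ∫ q in B, |H q| := integral_nonneg fun _ => abs_nonneg _
  have p2 : 0 ≤ ∫ q in B, |pd 1 H q| := integral_nonneg fun _ => abs_nonneg _
  rw [r1, r2, ← ofReal_norm, ← ENNReal.ofReal_pow (by positivity), ← ENNReal.ofReal_mul hC0,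
    ← ENNReal.ofReal_mul (by positivity), ← ENNReal.ofReal_mul (by positivity),
    ← ENNReal.ofReal_mul (by positivity), ← ENNReal.ofReal_add (by positivity) p1,
    ← ENNReal.ofReal_add (by positivity) (by positivity),
    ENNReal.ofReal_le_ofReal_iff (by positivity)] at main
  rw [Real.norm_eq_abs] at main
  linarith

/-- mollification -/
def moll (ρ : ContDiffBump (0 : V2)) (f : V2 → ℝ) : V2 → ℝ :=
  convolution (ρ.normed volume) f (ContinuousLinearMap.lsmul ℝ ℝ) volume

lemma moll_apply (ρ : ContDiffBump (0 : V2)) (f : V2 → ℝ) (x : V2) :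
    moll ρ f x = ∫ y, ρ.normed volume (x - y) * f y := by
  rw [moll, convolution_eq_swap]; simp

lemma moll_contDiff (ρ : ContDiffBump (0 : V2)) {f : V2 → ℝ} (hf : Integrable f) :
    ContDiff ℝ (⊤ : ℕ∞) (moll ρ f) := by
  apply HasCompactSupport.contDiff_convolution_left
  · exact ρ.hasCompactSupport_normed
  · exact ρ.contDiff_normed
  · exact hf.locallyIntegrable

lemma moll_pd (ρ : ContDiffBump (0 : V2)) {f : V2 → ℝ} (hf : Integrable f) (j : Fin 2) (x : V2) :
    pd j (moll ρ f) x = ∫ y, pd j (ρ.normed volume) (x - y) * f y := by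
  have h := HasCompactSupport.hasFDerivAt_convolution_left (𝕜 := ℝ)
    (ContinuousLinearMap.lsmul ℝ ℝ) (μ := (volume : Measure V2)) (f := ρ.normed volume)
    ρ.hasCompactSupport_normed (ρ.contDiff_normed (n := 1)) hf.locallyIntegrable x
  unfold pd
  rw [show fderiv ℝ (moll ρ f) x = _ from h.fderiv, convolution_eq_swap]
  have hc : HasCompactSupport (fderiv ℝ (ρ.normed (volume : Measure V2))) :=
    ρ.hasCompactSupport_normed.fderiv ℝ
  have hex : ConvolutionExistsAt (fderiv ℝ (ρ.normed (volume : Measure V2))) f x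
      (ContinuousLinearMap.precompL V2 (ContinuousLinearMap.lsmul ℝ ℝ)) volume :=
    hc.convolutionExists_left _
      ((ρ.contDiff_normed (n := 1)).continuous_fderiv one_ne_zero) hf.locallyIntegrable x
  rw [ContinuousLinearMap.integral_apply]
  · simp [ContinuousLinearMap.precompL_apply]
  · exact (hex.integrable_swap)

/-- scalar BV function -/
structure SBV (Ω : Set V2) (f : V2 → ℝ) (g : Fin 2 → V2 → ℝ) (σ : Measure V2)
    (s : Fin 2 → V2 → ℝ) : Prop where
  int_f : IntegrableOn f Ω
  int_g : ∀ j, IntegrableOn (g j) Ω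
  fin : IsFiniteMeasure σ
  meas_s : ∀ j, AEMeasurable (s j) σ
  bd : ∀ j, ∀ᵐ x ∂σ, |s j x| ≤ 1
  ibp : ∀ φ : V2 → ℝ, ContDiff ℝ (⊤ : ℕ∞) φ → HasCompactSupport φ → tsupport φ ⊆ Ω →
    ∀ j, ∫ x in Ω, f x * pd j φ x = (- ∫ x in Ω, φ x * g j x) - ∫ x, φ x * s j x ∂σ

lemma normed_sub_eq_zero (ρ : ContDiffBump (0 : V2)) {x y : V2} (h : ρ.rOut ≤ dist y x) :
    ρ.normed volume (x - y) = 0 := by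
  have : x - y ∉ Function.support (ρ.normed (volume : Measure V2)) := by
    rw [ρ.support_normed_eq]
    simpa [dist_eq_norm, norm_sub_rev] using h
  simpa using this

lemma SBV.moll_pd {Ω : Set V2} {f : V2 → ℝ} {g : Fin 2 → V2 → ℝ} {σ : Measure V2}
    {s : Fin 2 → V2 → ℝ} (h : SBV Ω f g σ s) (hΩ : IsOpen Ω) (ρ : ContDiffBump (0 : V2))
    {x : V2} (hx : Metric.closedBall x ρ.rOut ⊆ Ω) (j : Fin 2) :
    pd j (moll ρ (Ω.indicator f)) x = moll ρ (Ω.indicator (g j)) x +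
      ∫ y, ρ.normed volume (x - y) * s j y ∂σ := by
  set φ : V2 → ℝ := fun y => ρ.normed volume (x - y) with hφ
  have hφs : ContDiff ℝ (⊤ : ℕ∞) φ := ρ.contDiff_normed.comp (contDiff_const.sub contDiff_id)
  have hts : tsupport φ ⊆ Metric.closedBall x ρ.rOut := by
    apply closure_minimal _ Metric.isClosed_closedBall
    intro y hy
    by_contra hcon
    rw [Metric.mem_closedBall, not_le] at hcon
    exact hy (normed_sub_eq_zero ρ hcon.le)
  have hcs : HasCompactSupport φ :=
    (isCompact_closedBall x ρ.rOut).of_isClosed_subset (isClosed_tsupport _) hts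
  have hpd : ∀ y, pd j φ y = - pd j (ρ.normed volume) (x - y) := by
    intro y
    unfold pd
    have h1 : HasFDerivAt (ρ.normed (volume : Measure V2)) (fderiv ℝ (ρ.normed volume) (x - y))
        (x - y) := ((ρ.contDiff_normed (n := 1)).differentiable one_ne_zero _).hasFDerivAt
    have h2 : HasFDerivAt (fun y : V2 => x - y) (-ContinuousLinearMap.id ℝ V2) y :=
      (hasFDerivAt_id y).const_sub x
    have h3 := h1.comp y h2
    rw [show fderiv ℝ φ y = _ from h3.fderiv]
    simp
  have := h.ibp φ hφs hcs (hts.trans hx) j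
  have hind : ∀ (k F : V2 → ℝ), ∫ y, k y * Ω.indicator F y = ∫ y in Ω, k y * F y := by
    intro k F
    rw [← integral_indicator hΩ.measurableSet]
    congr 1; ext y
    by_cases hy : y ∈ Ω <;> simp [hy]
  rw [_root_.moll_pd ρ (h.int_f.integrable_indicator hΩ.measurableSet), hind, moll_apply, hind]
  simp only [hpd, mul_neg, integral_neg] at this
  have e : ∫ y in Ω, pd j (ρ.normed volume) (x - y) * f y
      = ∫ y in Ω, f y * pd j (ρ.normed volume) (x - y) := by
    congr 1; ext y; ring
  rw [e]
  simp only [hφ] at this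
  linarith

lemma moll_fubini (ρ : ContDiffBump (0 : V2)) (ν : Measure V2) [SFinite ν] {F : V2 → ℝ≥0∞}
    (hF : AEMeasurable F ν) (x : V2) (r : ℝ) :
    ∫⁻ z in Metric.closedBall x r, ∫⁻ y, ENNReal.ofReal (ρ.normed volume (z - y)) * F y ∂ν ≤
      ∫⁻ y in Metric.closedBall x (r + ρ.rOut), F y ∂ν := by
  have hk : Measurable fun q : V2 × V2 => ENNReal.ofReal (ρ.normed volume (q.1 - q.2)) := by
    apply ENNReal.measurable_ofReal.comp
    exact (ρ.continuous_normed.comp (continuous_fst.sub continuous_snd)).measurable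
  rw [lintegral_lintegral_swap]
  · rw [← lintegral_indicator Metric.isClosed_closedBall.measurableSet]
    apply lintegral_mono
    intro y
    dsimp only
    have hky : Measurable fun z : V2 => ENNReal.ofReal (ρ.normed volume (z - y)) :=
      (ρ.continuous_normed.comp (continuous_id.sub continuous_const)).measurable.ennreal_ofReal
    rw [lintegral_mul_const _ hky]
    by_cases hy : y ∈ Metric.closedBall x (r + ρ.rOut)
    · rw [indicator_of_mem hy]
      have : ∫⁻ z in Metric.closedBall x r, ENNReal.ofReal (ρ.normed volume (z - y)) ≤ 1 := by
        calc _ ≤ ∫⁻ z, ENNReal.ofReal (ρ.normed volume (z - y)) := setLIntegral_le_lintegral _ _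
          _ = ∫⁻ z, ENNReal.ofReal (ρ.normed volume z) :=
            lintegral_sub_right_eq_self (fun z => ENNReal.ofReal (ρ.normed volume z)) y
          _ = 1 := by
            rw [← ofReal_integral_eq_lintegral_ofReal ρ.integrable_normed
              (Eventually.of_forall ρ.nonneg_normed), ρ.integral_normed]
            simp
      calc _ ≤ 1 * F y := by gcongr
        _ = F y := one_mul _
    · rw [indicator_of_notMem hy]
      have : ∫⁻ z in Metric.closedBall x r, ENNReal.ofReal (ρ.normed volume (z - y)) = 0 := by
        rw [setLIntegral_congr_fun (g := fun _ => 0) Metric.isClosed_closedBall.measurableSet]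
        · simp
        · intro z hz
          dsimp only
          rw [normed_sub_eq_zero, ENNReal.ofReal_zero]
          rw [Metric.mem_closedBall, not_le] at hy
          rw [Metric.mem_closedBall] at hz
          linarith [dist_triangle y z x]
      rw [this, zero_mul]
  · exact hk.aemeasurable.mul hF.comp_snd

lemma moll_lintegral_le (ρ : ContDiffBump (0 : V2)) {f : V2 → ℝ} (hf : AEMeasurable f)
    (x : V2) (r : ℝ) :
    ∫⁻ z in Metric.closedBall x r, ‖moll ρ f z‖ₑ ≤
      ∫⁻ y in Metric.closedBall x (r + ρ.rOut), ‖f y‖ₑ := by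
  refine le_trans (lintegral_mono fun z => ?_) (moll_fubini ρ volume hf.enorm x r)
  rw [moll_apply]
  refine (enorm_integral_le_lintegral_enorm _).trans (lintegral_mono fun y => ?_)
  rw [enorm_mul, ← ofReal_norm (ρ.normed _ _), Real.norm_of_nonneg (ρ.nonneg_normed _)]

lemma sing_lintegral_le (ρ : ContDiffBump (0 : V2)) {σ : Measure V2} [SFinite σ] {s : V2 → ℝ}
    (hs : AEMeasurable s σ) (hb : ∀ᵐ x ∂σ, |s x| ≤ 1)
    (x : V2) (r : ℝ) :
    ∫⁻ z in Metric.closedBall x r, ‖∫ y, ρ.normed volume (z - y) * s y ∂σ‖ₑ ≤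
      σ (Metric.closedBall x (r + ρ.rOut)) := by
  have h1 : ∫⁻ z in Metric.closedBall x r, ‖∫ y, ρ.normed volume (z - y) * s y ∂σ‖ₑ ≤
      ∫⁻ y in Metric.closedBall x (r + ρ.rOut), ‖s y‖ₑ ∂σ := by
    refine le_trans (lintegral_mono fun z => ?_) (moll_fubini ρ σ hs.enorm x r)
    refine (enorm_integral_le_lintegral_enorm _).trans (lintegral_mono fun y => ?_)
    rw [enorm_mul, ← ofReal_norm (ρ.normed _ _), Real.norm_of_nonneg (ρ.nonneg_normed _)]
  refine h1.trans ?_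
  calc _ ≤ ∫⁻ y in Metric.closedBall x (r + ρ.rOut), 1 ∂σ := by
        apply lintegral_mono_ae
        filter_upwards [ae_restrict_of_ae hb] with y hy
        rw [← ofReal_norm, Real.norm_eq_abs]
        simpa using hy
    _ = _ := by simp

lemma integrable_normed_sub (ρ : ContDiffBump (0 : V2)) (x : V2) :
    Integrable fun y => ρ.normed volume (x - y) :=
  (integrable_comp_sub_left (fun z => ρ.normed volume z) x).2 ρ.integrable_normed

lemma integral_normed_sub (ρ : ContDiffBump (0 : V2)) (x : V2) :
    ∫ y, ρ.normed volume (x - y) = 1 := by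
  rw [integral_sub_left_eq_self (fun z => ρ.normed volume z) volume x, ρ.integral_normed]

lemma moll_le (ρ : ContDiffBump (0 : V2)) {f : V2 → ℝ} {C : ℝ} (hC : ∀ᵐ x, |f x| ≤ C) (x : V2) :
    |moll ρ f x| ≤ C := by
  rw [moll_apply]
  calc |∫ y, ρ.normed volume (x - y) * f y| ≤ ∫ y, ρ.normed volume (x - y) * C := by
        rw [← Real.norm_eq_abs]
        apply norm_integral_le_of_norm_le ((integrable_normed_sub ρ x).mul_const C)
        filter_upwards [hC] with y hy
        rw [norm_mul, Real.norm_of_nonneg (ρ.nonneg_normed _)]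
        exact mul_le_mul_of_nonneg_left hy (ρ.nonneg_normed _)
    _ = C := by rw [integral_mul_const, integral_normed_sub, one_mul]

lemma moll_symm (ρ : ContDiffBump (0 : V2)) {a b : V2 → ℝ} (ha : Integrable a) (hb : Integrable b) :
    ∫ x, a x * moll ρ b x = ∫ x, moll ρ a x * b x := by
  have h1 : ∀ x, a x * moll ρ b x = ∫ y, a x * (ρ.normed volume (x - y) * b y) := by
    intro x; rw [moll_apply, integral_const_mul]
  have h2 : ∀ y, moll ρ a y * b y = ∫ x, a x * (ρ.normed volume (x - y) * b y) := by
    intro y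
    rw [moll_apply, ← integral_mul_const]
    congr 1; ext x
    have : ρ.normed (volume : Measure V2) (y - x) = ρ.normed volume (x - y) := by
      rw [← ρ.normed_neg, neg_sub]
    rw [this]; ring
  simp_rw [h1, h2]
  apply integral_integral_swap
  have hprod : Integrable (fun q : V2 × V2 => a q.1 * b q.2) (volume.prod volume) :=
    ha.mul_prod hb
  obtain ⟨M, hM⟩ : ∃ M, ∀ z, ‖ρ.normed (volume : Measure V2) z‖ ≤ M :=
    ρ.continuous_normed.bounded_above_of_compact_support ρ.hasCompactSupport_normed
  have := hprod.bdd_mul (c := M) (f := fun q : V2 × V2 => ρ.normed volume (q.1 - q.2))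
    ((ρ.continuous_normed.comp (continuous_fst.sub continuous_snd)).aestronglyMeasurable)
    (Eventually.of_forall fun q => hM _)
  refine this.congr (Eventually.of_forall fun q => ?_)
  simp only [Function.uncurry]
  ring

/-- A sequence of bumps. -/
def bmp (k : ℕ) : ContDiffBump (0 : V2) :=
  ⟨1 / ((k : ℝ) + 1), 2 / ((k : ℝ) + 1), by positivity, by
    apply div_lt_div_of_pos_right one_lt_two (by positivity)⟩

lemma bmp_rOut : Tendsto (fun k => (bmp k).rOut) atTop (𝓝 0) := by
  have := (tendsto_one_div_add_atTop_nhds_zero_nat (𝕜 := ℝ)).const_mul 2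
  simpa [bmp, div_eq_mul_inv] using this

lemma moll_ae {f : V2 → ℝ} (hf : Integrable f) :
    ∀ᵐ x, Tendsto (fun k => moll (bmp k) f x) atTop (𝓝 (f x)) := by
  apply ContDiffBump.ae_convolution_tendsto_right_of_locallyIntegrable (K := 2) bmp_rOut
  · apply Eventually.of_forall
    intro k
    simp only [bmp]
    rw [← mul_div_assoc, mul_one]
  · exact hf.locallyIntegrable

lemma pd_notMem {φ : V2 → ℝ} {x : V2} (h : x ∉ tsupport φ) (j : Fin 2) : pd j φ x = 0 := by
  simp [pd, fderiv_of_notMem_tsupport ℝ h]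

lemma setIntegral_eq_of_zero {Ω : Set V2} {F : V2 → ℝ} (h : ∀ x, x ∉ Ω → F x = 0) :
    ∫ x in Ω, F x = ∫ x, F x := setIntegral_eq_integral_of_forall_compl_eq_zero h

/-- affine function -/
def aff (c : ℝ) (L : Fin 2 → ℝ) (x : V2) : ℝ := c + L 0 * x 0 + L 1 * x 1

lemma aff_contDiff (c : ℝ) (L : Fin 2 → ℝ) : ContDiff ℝ (⊤ : ℕ∞) (aff c L) := by
  unfold aff; fun_prop

lemma aff_pd (c : ℝ) (L : Fin 2 → ℝ) (j : Fin 2) (x : V2) : pd j (aff c L) x = L j := by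
  unfold pd
  have h0 : HasFDerivAt (fun x : V2 => x 0) (ContinuousLinearMap.proj (R := ℝ) 0) x :=
    (ContinuousLinearMap.proj (R := ℝ) (φ := fun _ : Fin 2 => ℝ) 0).hasFDerivAt
  have h1 : HasFDerivAt (fun x : V2 => x 1) (ContinuousLinearMap.proj (R := ℝ) 1) x :=
    (ContinuousLinearMap.proj (R := ℝ) (φ := fun _ : Fin 2 => ℝ) 1).hasFDerivAt
  have h2 := (((h0.const_mul (L 0)).const_add c)).add (h1.const_mul (L 1))
  rw [show fderiv ℝ (aff c L) x = _ from h2.fderiv]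
  fin_cases j <;> simp

lemma SBV.sub_aff {Ω : Set V2} {f : V2 → ℝ} {g : Fin 2 → V2 → ℝ} {σ : Measure V2}
    {s : Fin 2 → V2 → ℝ} (h : SBV Ω f g σ s) (hb : Bornology.IsBounded Ω)
    (c : ℝ) (L : Fin 2 → ℝ) :
    SBV Ω (fun x => f x - aff c L x) (fun j x => g j x - L j) σ s := by
  have hvol : volume Ω ≠ ⊤ := hb.measure_lt_top.ne
  have haff : IntegrableOn (aff c L) Ω :=
    ((aff_contDiff c L).continuous.continuousOn.integrableOn_compact
      hb.isCompact_closure).mono_set subset_closure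
  refine ⟨h.int_f.sub haff, fun j => (h.int_g j).sub (integrableOn_const hvol), h.fin, h.meas_s,
    h.bd, ?_⟩
  intro φ hφ hc hs j
  have hpc : Continuous (pd j φ) := continuous_pd (hφ.of_le (by exact_mod_cast le_top)) j
  have hpcs : HasCompactSupport (pd j φ) :=
    hc.mono' (fun x hx => by
      by_contra hcon
      exact hx (pd_notMem hcon j))
  have hA := h.ibp φ hφ hc hs j
  obtain ⟨M, hM⟩ := hpc.bounded_above_of_compact_support hpcs
  obtain ⟨M2, hM2⟩ := hφ.continuous.bounded_above_of_compact_support hc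
  have i1 : IntegrableOn (fun x => f x * pd j φ x) Ω :=
    h.int_f.mul_bdd (c := M) hpc.aestronglyMeasurable (Eventually.of_forall hM)
  have i2 : IntegrableOn (fun x => aff c L x * pd j φ x) Ω :=
    haff.mul_bdd (c := M) hpc.aestronglyMeasurable (Eventually.of_forall hM)
  have i3 : IntegrableOn (fun x => φ x * g j x) Ω :=
    (h.int_g j).bdd_mul (c := M2) hφ.continuous.aestronglyMeasurable (Eventually.of_forall hM2)
  have i4 : IntegrableOn (fun x => φ x * L j) Ω :=
    ((hφ.continuous.integrable_of_hasCompactSupport hc).mul_const _).integrableOn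
  have e1 : ∫ x in Ω, aff c L x * pd j φ x = - ∫ x in Ω, φ x * L j := by
    rw [setIntegral_eq_of_zero, setIntegral_eq_of_zero]
    · have := integral_mul_fderiv_eq_neg_fderiv_mul_of_integrable (μ := (volume : Measure V2))
        (f := aff c L) (g := φ) (v := Pi.single j 1) ?_ ?_ ?_ ?_ ?_
      · change ∫ x, aff c L x * fderiv ℝ φ x (Pi.single j 1) = _
        rw [this]
        congr 2
        ext x
        rw [show fderiv ℝ (aff c L) x (Pi.single j 1) = L j from aff_pd c L j x, mul_comm]
      · have : (fun x => fderiv ℝ (aff c L) x (Pi.single j 1) * φ x) = fun x => L j * φ x := by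
          ext x
          rw [show fderiv ℝ (aff c L) x (Pi.single j 1) = L j from aff_pd c L j x]
        rw [this]
        exact (hφ.continuous.integrable_of_hasCompactSupport hc).const_mul _
      · exact ((aff_contDiff c L).continuous.mul hpc).integrable_of_hasCompactSupport
          hpcs.mul_left
      · exact ((aff_contDiff c L).continuous.mul hφ.continuous).integrable_of_hasCompactSupport
          hc.mul_left
      · exact fun x _ => (aff_contDiff c L).differentiable (by simp) x
      · exact fun x _ => hφ.differentiable (by simp) x
    · intro x hx
      rw [image_eq_zero_of_notMem_tsupport (fun hh => hx (hs hh)), zero_mul]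
    · intro x hx
      rw [pd_notMem (fun hh => hx (hs hh)), mul_zero]
  simp only [sub_mul, mul_sub]
  rw [integral_sub i1 i2, integral_sub i3 i4, hA, e1]
  ring

lemma exists_bmp_lt {η : ℝ} (hη : 0 < η) : ∀ᶠ k in atTop, (bmp k).rOut < η :=
  (tendsto_order.1 bmp_rOut).2 η hη

lemma SBV.poincare {Ω : Set V2} {f : V2 → ℝ} {g : Fin 2 → V2 → ℝ} {σ : Measure V2}
    {s : Fin 2 → V2 → ℝ} (h : SBV Ω f g σ s) (hΩ : IsOpen Ω) (x : V2) {r : ℝ} (hr : 0 < r)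
    (hx : Metric.closedBall x (2 * r) ⊆ Ω) :
    ∃ c : ℝ, ∫⁻ p in Metric.closedBall x r, ‖f p - c‖ₑ ≤ ENNReal.ofReal (2 * r) *
      ((∫⁻ p in Metric.closedBall x (2 * r), ‖g 0 p‖ₑ) +
       (∫⁻ p in Metric.closedBall x (2 * r), ‖g 1 p‖ₑ) +
        2 * σ (Metric.closedBall x (2 * r))) := by
  have := h.fin
  set B := Metric.closedBall x r with hB
  set M := ((∫⁻ p in Metric.closedBall x (2 * r), ‖g 0 p‖ₑ) +
       (∫⁻ p in Metric.closedBall x (2 * r), ‖g 1 p‖ₑ) +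
        2 * σ (Metric.closedBall x (2 * r))) with hM
  have hBm : MeasurableSet B := Metric.isClosed_closedBall.measurableSet
  have hBΩ : B ⊆ Ω := (Metric.closedBall_subset_closedBall (by linarith)).trans hx
  set F := Ω.indicator f with hF
  have hFi : Integrable F := h.int_f.integrable_indicator hΩ.measurableSet
  set H : ℕ → V2 → ℝ := fun k => moll (bmp k) F with hH
  have hHc : ∀ k, Continuous (H k) := fun k => (moll_contDiff _ hFi).continuous
  have hsm : ∀ᶠ k in atTop, ∫⁻ p in B, ∫⁻ q in B, ‖H k p - H k q‖ₑ ≤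
      ENNReal.ofReal (2 * r) ^ 3 * M := by
    filter_upwards [exists_bmp_lt hr] with k hk
    refine (poincare_smooth ((moll_contDiff (bmp k) hFi).of_le (by exact_mod_cast le_top)) x
      hr.le).trans ?_
    have hsub : Metric.closedBall x (r + (bmp k).rOut) ⊆ Metric.closedBall x (2 * r) :=
      Metric.closedBall_subset_closedBall (by linarith)
    have key : ∀ j, ∫⁻ p in B, ‖pd j (H k) p‖ₑ ≤
        (∫⁻ p in Metric.closedBall x (2 * r), ‖g j p‖ₑ) + σ (Metric.closedBall x (2 * r)) := by
      intro j
      have hgi : Integrable (Ω.indicator (g j)) :=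
        (h.int_g j).integrable_indicator hΩ.measurableSet
      calc ∫⁻ p in B, ‖pd j (H k) p‖ₑ ≤ ∫⁻ p in B, (‖moll (bmp k) (Ω.indicator (g j)) p‖ₑ +
            ‖∫ y, (bmp k).normed volume (p - y) * s j y ∂σ‖ₑ) := by
            apply setLIntegral_mono' hBm
            intro p hp
            rw [hH]
            dsimp only
            rw [h.moll_pd hΩ (bmp k) _ j]
            · exact enorm_add_le _ _
            · refine subset_trans ?_ hx
              apply Metric.closedBall_subset_closedBall'
              rw [Metric.mem_closedBall] at hp
              linarith
        _ = (∫⁻ p in B, ‖moll (bmp k) (Ω.indicator (g j)) p‖ₑ) +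
            ∫⁻ p in B, ‖∫ y, (bmp k).normed volume (p - y) * s j y ∂σ‖ₑ :=
            lintegral_add_left (moll_contDiff _ hgi).continuous.measurable.enorm _
        _ ≤ _ := by
            apply add_le_add
            · refine (moll_lintegral_le _ hgi.aestronglyMeasurable.aemeasurable x r).trans ?_
              refine (lintegral_mono_set hsub).trans ?_
              apply setLIntegral_mono' Metric.isClosed_closedBall.measurableSet
              intro p hp
              rw [indicator_of_mem (hx hp)]
            · exact (sing_lintegral_le _ (h.meas_s j) (h.bd j) x r).trans (measure_mono hsub)
    gcongr
    calc _ ≤ _ := add_le_add (key 0) (key 1)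
      _ = M := by rw [hM]; ring
  have hae : ∀ᵐ p ∂(volume.restrict B), Tendsto (fun k => H k p) atTop (𝓝 (f p)) := by
    rw [ae_restrict_iff' hBm]
    filter_upwards [moll_ae hFi] with p hp hpB
    rwa [hF, indicator_of_mem (hBΩ hpB)] at hp
  have hfin : ∫⁻ p in B, ∫⁻ q in B, ‖f p - f q‖ₑ ≤ ENNReal.ofReal (2 * r) ^ 3 * M := by
    calc ∫⁻ p in B, ∫⁻ q in B, ‖f p - f q‖ₑ
        ≤ ∫⁻ p in B, liminf (fun k => ∫⁻ q in B, ‖H k p - H k q‖ₑ) atTop := by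
          apply lintegral_mono_ae
          filter_upwards [hae] with p hp
          refine le_trans ?_ (lintegral_liminf_le ?_)
          · apply lintegral_mono_ae
            filter_upwards [hae] with q hq
            exact ((hp.sub hq).enorm.liminf_eq).ge
          · exact fun k => ((continuous_const.sub (hHc k)).measurable).enorm
      _ ≤ liminf (fun k => ∫⁻ p in B, ∫⁻ q in B, ‖H k p - H k q‖ₑ) atTop := by
          apply lintegral_liminf_le
          intro k
          apply Measurable.lintegral_prod_right' (f := fun z : V2 × V2 => ‖H k z.1 - H k z.2‖ₑ)
          exact (((hHc k).comp continuous_fst).sub ((hHc k).comp continuous_snd)).measurable.enorm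
      _ ≤ _ := by
          exact liminf_le_of_frequently_le' hsm.frequently
  have hvB : volume B = ENNReal.ofReal (2 * r) ^ 2 := by
    rw [hB, Real.volume_pi_closedBall _ hr.le, ENNReal.ofReal_pow (by positivity)]; simp
  have h2r : ENNReal.ofReal (2 * r) ≠ 0 := by simp [hr]
  have hfm : AEMeasurable f (volume.restrict B) :=
    (h.int_f.mono_set hBΩ).aestronglyMeasurable.aemeasurable
  obtain ⟨p, hp, hpa⟩ := exists_le_setLAverage (μ := volume) (s := B)
    (f := fun p => ∫⁻ q in B, ‖f p - f q‖ₑ) (by rw [hvB]; exact pow_ne_zero _ h2r)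
    (by rw [hvB]; exact ENNReal.pow_ne_top ENNReal.ofReal_ne_top) (by
      apply AEMeasurable.lintegral_prod_right' (f := fun z : V2 × V2 => ‖f z.1 - f z.2‖ₑ)
      exact (hfm.comp_fst.sub hfm.comp_snd).enorm)
  refine ⟨f p, ?_⟩
  calc ∫⁻ q in B, ‖f q - f p‖ₑ = ∫⁻ q in B, ‖f p - f q‖ₑ := by
        congr 1; ext q; rw [enorm_sub_rev]
    _ ≤ _ := hpa
    _ ≤ (ENNReal.ofReal (2 * r) ^ 3 * M) / ENNReal.ofReal (2 * r) ^ 2 := by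
        rw [setLAverage_eq, hvB]; gcongr
    _ = _ := by
        rw [pow_succ, mul_assoc, mul_comm, ENNReal.mul_div_cancel_right]
        · exact pow_ne_zero _ h2r
        · exact ENNReal.pow_ne_top ENNReal.ofReal_ne_top

lemma integral_abs_le_of_lintegral {F : V2 → ℝ} (hF : Continuous F) {B : Set V2} {A : ℝ}
    (hA : 0 ≤ A) (h : ∫⁻ p in B, ‖F p‖ₑ ≤ ENNReal.ofReal A) : ∫ p in B, |F p| ≤ A := by
  have := integral_norm_eq_lintegral_enorm (μ := volume.restrict B) hF.aestronglyMeasurable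
  simp only [Real.norm_eq_abs] at this
  rw [this]
  exact ENNReal.toReal_le_of_le_ofReal hA h

lemma SBV.sup_bound {Ω : Set V2} {w : V2 → ℝ} {g : Fin 2 → V2 → ℝ} (h : SBV Ω w g 0 0)
    (hΩ : IsOpen Ω) (x₀ : V2) {r η C A m : ℝ} (hη : 0 < η)
    (hx : Metric.closedBall x₀ (r + 2 * η) ⊆ Ω)
    (hC0 : 0 ≤ C) (hC : ∀ᵐ x ∂(volume.restrict Ω), |g 0 x| ≤ C) (hA : 0 ≤ A) (hm : 0 ≤ m)
    (hwA : ∫⁻ p in Metric.closedBall x₀ (r + 2 * η), ‖w p‖ₑ ≤ ENNReal.ofReal A)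
    (hgm : ∀ x ∈ Metric.closedBall x₀ r,
      ∫⁻ p in Metric.closedBall x (2 * η), ‖g 1 p‖ₑ ≤ ENNReal.ofReal m) :
    ∀ᵐ x, x ∈ Metric.closedBall x₀ r → 4 * η ^ 2 * |w x| ≤ 8 * C * η ^ 3 + A + 2 * η * m := by
  have hwi : Integrable (Ω.indicator w) := h.int_f.integrable_indicator hΩ.measurableSet
  have hgi : ∀ j, Integrable (Ω.indicator (g j)) := fun j =>
    (h.int_g j).integrable_indicator hΩ.measurableSet
  have hC' : ∀ᵐ x, |Ω.indicator (g 0) x| ≤ C := by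
    rw [ae_restrict_iff' hΩ.measurableSet] at hC
    filter_upwards [hC] with x hx
    by_cases hxΩ : x ∈ Ω
    · simpa [hxΩ] using hx hxΩ
    · simpa [hxΩ] using hC0
  filter_upwards [moll_ae hwi] with x hlim hxB
  have hsubΩ : Metric.closedBall x (2 * η) ⊆ Metric.closedBall x₀ (r + 2 * η) := by
    apply Metric.closedBall_subset_closedBall'
    rw [Metric.mem_closedBall] at hxB
    linarith
  have hxΩ : x ∈ Ω := hx (hsubΩ (Metric.mem_closedBall_self (by positivity)))
  rw [indicator_of_mem hxΩ] at hlim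
  refine le_of_tendsto ((hlim.abs).const_mul (4 * η ^ 2)) ?_
  filter_upwards [exists_bmp_lt hη] with k hk
  have hcd : ContDiff ℝ 1 (moll (bmp k) (Ω.indicator w)) :=
    (moll_contDiff (bmp k) hwi).of_le (by exact_mod_cast le_top)
  have hsub2 : Metric.closedBall x (η + (bmp k).rOut) ⊆ Metric.closedBall x (2 * η) :=
    Metric.closedBall_subset_closedBall (by linarith)
  have hpd : ∀ p ∈ Metric.closedBall x η, ∀ j, pd j (moll (bmp k) (Ω.indicator w)) p =
      moll (bmp k) (Ω.indicator (g j)) p := by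
    intro p hp j
    rw [h.moll_pd hΩ (bmp k) _ j]
    · simp
    · refine subset_trans ?_ (hsubΩ.trans hx)
      apply Metric.closedBall_subset_closedBall'
      rw [Metric.mem_closedBall] at hp
      linarith
  have hs := sup_smooth hcd x (C := C) hη (fun p hp => by
    rw [hpd p hp 0]; exact moll_le _ hC' p)
  have b1 : ∫ p in Metric.closedBall x η, |moll (bmp k) (Ω.indicator w) p| ≤ A := by
    apply integral_abs_le_of_lintegral hcd.continuous hA
    refine (moll_lintegral_le _ hwi.aestronglyMeasurable.aemeasurable x η).trans ?_
    refine le_trans (lintegral_mono_set (hsub2.trans hsubΩ)) (le_trans ?_ hwA)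
    apply lintegral_mono
    intro p
    dsimp only
    rw [enorm_indicator_eq_indicator_enorm]
    exact indicator_le_self _ _ p
  have b2 : ∫ p in Metric.closedBall x η, |pd 1 (moll (bmp k) (Ω.indicator w)) p| ≤ m := by
    apply integral_abs_le_of_lintegral (continuous_pd hcd 1) hm
    rw [setLIntegral_congr_fun (g := fun p => ‖moll (bmp k) (Ω.indicator (g 1)) p‖ₑ)
      Metric.isClosed_closedBall.measurableSet (fun p hp => by simp only [hpd p hp 1])]
    refine (moll_lintegral_le _ (hgi 1).aestronglyMeasurable.aemeasurable x η).trans ?_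
    refine le_trans (lintegral_mono_set hsub2) (le_trans ?_ (hgm x hxB))
    apply lintegral_mono
    intro p
    dsimp only
    rw [enorm_indicator_eq_indicator_enorm]
    exact indicator_le_self _ _ p
  have : 2 * η * ∫ p in Metric.closedBall x η, |pd 1 (moll (bmp k) (Ω.indicator w)) p|
      ≤ 2 * η * m := by gcongr
  linarith

lemma moll_lim {a b : V2 → ℝ} (ha : Integrable a) (hb : Integrable b) {C : ℝ}
    (hC : ∀ᵐ x, |b x| ≤ C) :
    Tendsto (fun k => ∫ x, a x * moll (bmp k) b x) atTop (𝓝 (∫ x, a x * b x)) := by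
  apply tendsto_integral_of_dominated_convergence (fun x => |a x| * C)
  · exact fun k => ha.aestronglyMeasurable.mul (moll_contDiff _ hb).continuous.aestronglyMeasurable
  · exact ha.abs.mul_const C
  · intro k
    filter_upwards with x
    rw [Real.norm_eq_abs, abs_mul]
    exact mul_le_mul_of_nonneg_left (moll_le _ hC x) (abs_nonneg _)
  · filter_upwards [moll_ae hb] with x hx
    exact hx.const_mul _

lemma pd_contDiff {H : V2 → ℝ} (hH : ContDiff ℝ (⊤ : ℕ∞) H) (j : Fin 2) :
    ContDiff ℝ (⊤ : ℕ∞) (pd j H) := by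
  unfold pd
  exact (hH.fderiv_right (m := (⊤ : ℕ∞)) (by exact_mod_cast le_top)).clm_apply contDiff_const

lemma pd_symm {H : V2 → ℝ} (hH : ContDiff ℝ (⊤ : ℕ∞) H) (x : V2) :
    pd 0 (pd 1 H) x = pd 1 (pd 0 H) x := by
  have hd : Differentiable ℝ (fderiv ℝ H) :=
    (hH.fderiv_right (m := (⊤ : ℕ∞)) (by exact_mod_cast le_top)).differentiable (by simp)
  have e : ∀ i j, pd i (pd j H) x = fderiv ℝ (fderiv ℝ H) x (Pi.single i 1) (Pi.single j 1) := by
    intro i j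
    have : HasFDerivAt (pd j H) ((fderiv ℝ (fderiv ℝ H) x).flip (Pi.single j 1)) x := by
      have := (hd x).hasFDerivAt.clm_apply (hasFDerivAt_const (Pi.single j 1 : V2) x)
      simp only [ContinuousLinearMap.comp_zero, zero_add] at this
      exact this
    rw [show pd i (pd j H) x = fderiv ℝ (pd j H) x (Pi.single i 1) from rfl, this.fderiv]
    simp
  rw [e, e]
  have hs : IsSymmSndFDerivAt ℝ H x := by
    apply ContDiffAt.isSymmSndFDerivAt (n := (⊤ : ℕ∞)) hH.contDiffAt
    rw [minSmoothness_of_isRCLikeNormedField]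
    exact WithTop.coe_le_coe.2 (le_top : (2 : ℕ∞) ≤ ⊤)
  exact hs _ _

lemma pd_mul {a b : V2 → ℝ} {x : V2} (ha : DifferentiableAt ℝ a x) (hb : DifferentiableAt ℝ b x)
    (j : Fin 2) : pd j (fun y => a y * b y) x = pd j a x * b x + a x * pd j b x := by
  unfold pd
  rw [show fderiv ℝ (fun y => a y * b y) x = _ from (ha.hasFDerivAt.mul hb.hasFDerivAt).fderiv]
  simp
  ring

lemma ind_bd {Ω : Set V2} (hΩ : IsOpen Ω) {f : V2 → ℝ} {C : ℝ} (hC0 : 0 ≤ C)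
    (hC : ∀ᵐ x ∂(volume.restrict Ω), |f x| ≤ C) : ∀ᵐ x, |Ω.indicator f x| ≤ C := by
  rw [ae_restrict_iff' hΩ.measurableSet] at hC
  filter_upwards [hC] with x hx
  by_cases hxΩ : x ∈ Ω
  · simpa [hxΩ] using hx hxΩ
  · simpa [hxΩ] using hC0

lemma key_smooth {Ω : Set V2} {w : V2 → ℝ} {wg : Fin 2 → V2 → ℝ}
    (hw : SBV Ω w wg 0 0) (x₀ : V2) {r S K : ℝ}
    (hx : Metric.closedBall x₀ r ⊆ Ω)
    (hS : ∀ᵐ x, x ∈ Metric.closedBall x₀ r → |w x| ≤ S)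
    {φ : V2 → ℝ} (hφ : ContDiff ℝ (⊤ : ℕ∞) φ) (hsupp : tsupport φ ⊆ Metric.closedBall x₀ r)
    (hK : ∀ j x, |pd j φ x| ≤ K) {G : V2 → ℝ} (hG : ContDiff ℝ (⊤ : ℕ∞) G) :
    |∫ x in Ω, φ x * (wg 0 x * pd 1 G x - wg 1 x * pd 0 G x)| ≤
      S * K * ((∫ x in Metric.closedBall x₀ r, |pd 0 G x|) +
        ∫ x in Metric.closedBall x₀ r, |pd 1 G x|) := by
  have hcs : HasCompactSupport φ :=
    (isCompact_closedBall x₀ r).of_isClosed_subset (isClosed_tsupport _) hsupp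
  have h1c : ∀ {H : V2 → ℝ}, ContDiff ℝ (⊤ : ℕ∞) H → ContDiff ℝ 1 H :=
    fun h => h.of_le (by exact_mod_cast le_top)
  have hψ : ∀ j, ContDiff ℝ (⊤ : ℕ∞) (fun x => φ x * pd j G x) := fun j => hφ.mul (pd_contDiff hG j)
  have hψc : ∀ j, HasCompactSupport (fun x => φ x * pd j G x) := fun j => hcs.mul_right
  have hψs : ∀ j, tsupport (fun x => φ x * pd j G x) ⊆ Metric.closedBall x₀ r := fun j =>
    (tsupport_mul_subset_left).trans hsupp
  have I1 := hw.ibp _ (hψ 1) (hψc 1) ((hψs 1).trans hx) 0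
  have I0 := hw.ibp _ (hψ 0) (hψc 0) ((hψs 0).trans hx) 1
  simp only [integral_zero_measure, sub_zero] at I1 I0
  have bdd : ∀ {F : V2 → ℝ}, Continuous F → HasCompactSupport F → ∀ {f : V2 → ℝ},
      IntegrableOn f Ω → IntegrableOn (fun x => f x * F x) Ω := by
    intro F hF hFc f hf
    obtain ⟨M, hM⟩ := hF.bounded_above_of_compact_support hFc
    exact hf.mul_bdd (c := M) hF.aestronglyMeasurable (Eventually.of_forall hM)
  have bdd' : ∀ {F : V2 → ℝ}, Continuous F → HasCompactSupport F → ∀ {f : V2 → ℝ},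
      IntegrableOn f Ω → IntegrableOn (fun x => F x * f x) Ω := by
    intro F hF hFc f hf
    simpa only [mul_comm] using bdd hF hFc hf
  have hpc : ∀ (i j : Fin 2), HasCompactSupport (pd i (fun x => φ x * pd j G x)) := fun i j =>
    (hψc j).mono' (fun x hx => by
      by_contra hcon
      exact hx (pd_notMem hcon i))
  have e1 : ∫ x in Ω, φ x * (wg 0 x * pd 1 G x - wg 1 x * pd 0 G x) =
      (∫ x in Ω, (φ x * pd 1 G x) * wg 0 x) - ∫ x in Ω, (φ x * pd 0 G x) * wg 1 x := by
    rw [← integral_sub (bdd' (hψ 1).continuous (hψc 1) (hw.int_g 0))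
      (bdd' (hψ 0).continuous (hψc 0) (hw.int_g 1))]
    congr 1; ext x; ring
  have e2 : (∫ x in Ω, w x * pd 0 (fun x => φ x * pd 1 G x) x) -
      (∫ x in Ω, w x * pd 1 (fun x => φ x * pd 0 G x) x) =
      ∫ x in Ω, w x * (pd 0 φ x * pd 1 G x - pd 1 φ x * pd 0 G x) := by
    rw [← integral_sub (bdd (continuous_pd (h1c (hψ 1)) 0) (hpc 0 1) hw.int_f)
      (bdd (continuous_pd (h1c (hψ 0)) 1) (hpc 1 0) hw.int_f)]
    congr 1; ext x
    rw [pd_mul (hφ.differentiable (by simp) x) ((pd_contDiff hG 1).differentiable (by simp) x),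
      pd_mul (hφ.differentiable (by simp) x) ((pd_contDiff hG 0).differentiable (by simp) x),
      pd_symm hG]
    ring
  have e3 : ∫ x in Ω, φ x * (wg 0 x * pd 1 G x - wg 1 x * pd 0 G x) =
      - ∫ x in Ω, w x * (pd 0 φ x * pd 1 G x - pd 1 φ x * pd 0 G x) := by
    rw [e1, ← e2, I1, I0]; ring
  have e4 : ∫ x in Ω, w x * (pd 0 φ x * pd 1 G x - pd 1 φ x * pd 0 G x) =
      ∫ x in Metric.closedBall x₀ r, w x * (pd 0 φ x * pd 1 G x - pd 1 φ x * pd 0 G x) := by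
    have hz : ∀ x, x ∉ Metric.closedBall x₀ r →
        w x * (pd 0 φ x * pd 1 G x - pd 1 φ x * pd 0 G x) = 0 := by
      intro x hx
      have : x ∉ tsupport φ := fun h => hx (hsupp h)
      simp [pd_notMem this]
    rw [setIntegral_eq_of_zero hz, setIntegral_eq_of_zero (fun x hxΩ => hz x fun h => hxΩ (hx h))]
  rw [e3, e4, abs_neg]
  have ic : ∀ j, IntegrableOn (fun x => |pd j G x|) (Metric.closedBall x₀ r) := fun j =>
    ((continuous_pd (h1c hG) j).abs.continuousOn).integrableOn_compact (isCompact_closedBall _ _)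
  rw [← integral_add (ic 0) (ic 1), ← integral_const_mul, ← Real.norm_eq_abs]
  apply norm_integral_le_of_norm_le (((ic 0).add (ic 1)).const_mul _)
  rw [ae_restrict_iff' Metric.isClosed_closedBall.measurableSet]
  filter_upwards [hS] with x hxS hxB
  have hS' := hxS hxB
  have hS0 : 0 ≤ S := (abs_nonneg _).trans hS'
  rw [Real.norm_eq_abs, abs_mul, mul_assoc]
  apply mul_le_mul hS' _ (abs_nonneg _) hS0
  calc |pd 0 φ x * pd 1 G x - pd 1 φ x * pd 0 G x|
      ≤ |pd 0 φ x * pd 1 G x| + |pd 1 φ x * pd 0 G x| := abs_sub _ _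
    _ ≤ K * |pd 1 G x| + K * |pd 0 G x| := by
      rw [abs_mul, abs_mul]
      exact add_le_add (mul_le_mul_of_nonneg_right (hK 0 x) (abs_nonneg _))
        (mul_le_mul_of_nonneg_right (hK 1 x) (abs_nonneg _))
    _ = K * ((fun x => |pd 0 G x|) + fun x => |pd 1 G x|) x := by simp; ring

lemma key_lemma {Ω : Set V2} (hΩ : IsOpen Ω) {w v : V2 → ℝ} {wg vg : Fin 2 → V2 → ℝ}
    (hw : SBV Ω w wg 0 0) (hv : SBV Ω v vg 0 0) (x₀ : V2) {r S K C C' T : ℝ} (hr : 0 < r)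
    (hx : Metric.closedBall x₀ (2 * r) ⊆ Ω) (hC0 : 0 ≤ C)
    (hC : ∀ᵐ x ∂(volume.restrict Ω), |wg 0 x| ≤ C) (hC0' : 0 ≤ C')
    (hC' : ∀ᵐ x ∂(volume.restrict Ω), |vg 0 x| ≤ C') (hS0 : 0 ≤ S)
    (hS : ∀ᵐ x, x ∈ Metric.closedBall x₀ r → |w x| ≤ S)
    {φ : V2 → ℝ} (hφ : ContDiff ℝ (⊤ : ℕ∞) φ) (hsupp : tsupport φ ⊆ Metric.closedBall x₀ r)
    (hK0 : 0 ≤ K) (hK : ∀ j x, |pd j φ x| ≤ K) (hT0 : 0 ≤ T)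
    (hT : ∀ j, ∫⁻ p in Metric.closedBall x₀ (2 * r), ‖vg j p‖ₑ ≤ ENNReal.ofReal T) :
    |∫ x in Ω, φ x * (wg 0 x * vg 1 x - wg 1 x * vg 0 x)| ≤ S * K * (T + T) := by
  have hcs : HasCompactSupport φ :=
    (isCompact_closedBall x₀ r).of_isClosed_subset (isClosed_tsupport _) hsupp
  obtain ⟨M, hM⟩ := hφ.continuous.bounded_above_of_compact_support hcs
  have hsub : Metric.closedBall x₀ r ⊆ Ω :=
    (Metric.closedBall_subset_closedBall (by linarith)).trans hx
  set a : Fin 2 → V2 → ℝ := fun j x => φ x * Ω.indicator (wg j) x with ha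
  set b : Fin 2 → V2 → ℝ := fun j => Ω.indicator (vg j) with hb
  have hbi : ∀ j, Integrable (b j) := fun j => (hv.int_g j).integrable_indicator hΩ.measurableSet
  have hai : ∀ j, Integrable (a j) := fun j =>
    ((hw.int_g j).integrable_indicator hΩ.measurableSet).bdd_mul (c := M)
      hφ.continuous.aestronglyMeasurable (Eventually.of_forall hM)
  have hvi : Integrable (Ω.indicator v) := hv.int_f.integrable_indicator hΩ.measurableSet
  have hb0 : ∀ᵐ x, |b 0 x| ≤ C' := ind_bd hΩ hC0' hC'
  have ha0 : ∀ᵐ x, |a 0 x| ≤ M * C := by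
    filter_upwards [ind_bd hΩ hC0 hC] with x hx
    rw [ha]; dsimp only
    rw [abs_mul]
    exact mul_le_mul (hM x) hx (abs_nonneg _) ((norm_nonneg _).trans (hM x))
  have L0 := moll_lim (hai 1) (hbi 0) hb0
  have L1 := moll_lim (hbi 1) (hai 0) ha0
  have L1' : Tendsto (fun k => ∫ x, a 0 x * moll (bmp k) (b 1) x) atTop
      (𝓝 (∫ x, a 0 x * b 1 x)) := by
    have e : ∀ k, ∫ x, b 1 x * moll (bmp k) (a 0) x = ∫ x, a 0 x * moll (bmp k) (b 1) x := by
      intro k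
      rw [moll_symm _ (hai 0) (hbi 1)]
      congr 1; ext x; ring
    simp_rw [e] at L1
    rw [show ∫ x, a 0 x * b 1 x = ∫ x, b 1 x * a 0 x by congr 1; ext x; ring]
    exact L1
  have hL := (L1'.sub L0).abs
  have efin : ∫ x in Ω, φ x * (wg 0 x * vg 1 x - wg 1 x * vg 0 x) =
      (∫ x, a 0 x * b 1 x) - ∫ x, a 1 x * b 0 x := by
    rw [← integral_sub]
    · rw [← integral_indicator hΩ.measurableSet]
      congr 1; ext x
      by_cases hxΩ : x ∈ Ω
      · simp [ha, hb, hxΩ]; ring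
      · simp [ha, hb, hxΩ]
    · exact (hbi 1).bdd_mul (c := M * C) (hai 0).aestronglyMeasurable (by simpa using ha0)
    · exact (hai 1).mul_bdd (c := C') (hbi 0).aestronglyMeasurable (by simpa using hb0)
  rw [efin]
  refine le_of_tendsto hL ?_
  filter_upwards [exists_bmp_lt hr] with k hk
  have hGs := moll_contDiff (bmp k) hvi
  have hpd : ∀ p ∈ Metric.closedBall x₀ r, ∀ j, pd j (moll (bmp k) (Ω.indicator v)) p =
      moll (bmp k) (b j) p := by
    intro p hp j
    rw [hv.moll_pd hΩ (bmp k) _ j]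
    · simp [hb]
    · refine subset_trans ?_ hx
      apply Metric.closedBall_subset_closedBall'
      rw [Metric.mem_closedBall] at hp
      linarith
  have ks := key_smooth hw x₀ hsub hS hφ hsupp hK hGs
  have bT : ∀ j, ∫ p in Metric.closedBall x₀ r, |pd j (moll (bmp k) (Ω.indicator v)) p| ≤ T := by
    intro j
    apply integral_abs_le_of_lintegral
      (continuous_pd (hGs.of_le (by exact_mod_cast le_top)) j) hT0
    rw [setLIntegral_congr_fun (g := fun p => ‖moll (bmp k) (b j) p‖ₑ)
      Metric.isClosed_closedBall.measurableSet (fun p hp => by simp only [hpd p hp j])]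
    refine (moll_lintegral_le _ (hbi j).aestronglyMeasurable.aemeasurable x₀ r).trans ?_
    refine le_trans (lintegral_mono_set (Metric.closedBall_subset_closedBall
      (show r + (bmp k).rOut ≤ 2 * r by linarith))) (le_trans ?_ (hT j))
    apply lintegral_mono
    intro p
    dsimp only [hb]
    rw [enorm_indicator_eq_indicator_enorm]
    exact indicator_le_self _ _ p
  have ek : (∫ x, a 0 x * moll (bmp k) (b 1) x) - ∫ x, a 1 x * moll (bmp k) (b 0) x =
      ∫ x in Ω, φ x * (wg 0 x * pd 1 (moll (bmp k) (Ω.indicator v)) x -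
        wg 1 x * pd 0 (moll (bmp k) (Ω.indicator v)) x) := by
    have hmc : ∀ j, Continuous (moll (bmp k) (b j)) := fun j => (moll_contDiff _ (hbi j)).continuous
    have hin : ∀ i j : Fin 2, Integrable (fun x => a i x * moll (bmp k) (b j) x) := by
      intro i j
      obtain ⟨N, hN⟩ := (isCompact_closedBall x₀ r).exists_bound_of_continuousOn
        (hmc j).continuousOn
      refine ((hai i).norm.mul_const N).mono'
        ((hai i).aestronglyMeasurable.mul (hmc j).aestronglyMeasurable) ?_
      filter_upwards with x
      by_cases hxB : x ∈ Metric.closedBall x₀ r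
      · rw [norm_mul]
        exact mul_le_mul_of_nonneg_left (hN x hxB) (norm_nonneg _)
      · have : φ x = 0 := image_eq_zero_of_notMem_tsupport (fun h => hxB (hsupp h))
        simp [ha, this]
    rw [← integral_sub (hin 0 1) (hin 1 0), ← integral_indicator hΩ.measurableSet]
    congr 1; ext x
    by_cases hxB : x ∈ Metric.closedBall x₀ r
    · have hxΩ := hsub hxB
      rw [indicator_of_mem hxΩ, hpd x hxB, hpd x hxB]
      simp [ha, hxΩ]; ring
    · have : φ x = 0 := image_eq_zero_of_notMem_tsupport (fun h => hxB (hsupp h))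
      simp only [ha, this, indicator]
      simp
  rw [ek]
  refine ks.trans ?_
  apply mul_le_mul_of_nonneg_left (add_le_add (bT 0) (bT 1)) (by positivity)

lemma small_of_tendsto {x : V2} {F : ℝ → ℝ≥0∞}
    (h : Tendsto (fun r => F r / volume (Metric.closedBall x r)) (𝓝[>] 0) (𝓝 0))
    {δ : ℝ} (hδ : 0 < δ) : ∀ᶠ r in 𝓝[>] 0, F r ≤ ENNReal.ofReal (δ * r ^ 2) := by
  have h1 : ∀ᶠ r in 𝓝[>] (0 : ℝ), F r / volume (Metric.closedBall x r) < ENNReal.ofReal (δ / 4) :=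
    (tendsto_order.1 h).2 _ (by simpa using hδ)
  filter_upwards [h1, self_mem_nhdsWithin] with r hr hr0
  have hr0 : 0 < r := hr0
  have hv : volume (Metric.closedBall x r) = ENNReal.ofReal ((2 * r) ^ 2) := by
    rw [Real.volume_pi_closedBall _ hr0.le]; simp
  rw [hv] at hr
  have hle := hr.le
  rw [ENNReal.div_le_iff (by simp; positivity) ENNReal.ofReal_ne_top,
    ← ENNReal.ofReal_mul (by positivity)] at hle
  refine hle.trans (ENNReal.ofReal_le_ofReal ?_)
  apply le_of_eq; ring

lemma good_leb {h : V2 → ℝ} (hh : Integrable h) :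
    ∀ᵐ x, ∀ δ : ℝ, 0 < δ → ∀ᶠ r in 𝓝[>] (0 : ℝ),
      ∫⁻ y in Metric.closedBall x r, ‖h y - h x‖ₑ ≤ ENNReal.ofReal (δ * r ^ 2) := by
  filter_upwards [(Besicovitch.vitaliFamily (volume : Measure V2)).ae_tendsto_lintegral_enorm_sub_div
    hh.locallyIntegrable] with x hx δ hδ
  exact small_of_tendsto (hx.comp (Besicovitch.tendsto_filterAt volume x)) hδ

lemma good_sing (τ : Measure V2) [IsFiniteMeasure τ] (hτ : τ ⟂ₘ volume) :
    ∀ᵐ x, ∀ δ : ℝ, 0 < δ → ∀ᶠ r in 𝓝[>] (0 : ℝ),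
      τ (Metric.closedBall x r) ≤ ENNReal.ofReal (δ * r ^ 2) := by
  filter_upwards [Besicovitch.ae_tendsto_rnDeriv τ (volume : Measure V2),
    (Measure.rnDeriv_eq_zero τ volume).2 hτ] with x hx hx0 δ hδ
  rw [hx0] at hx
  exact small_of_tendsto hx hδ

lemma good_mu (μ : Measure V2) [IsFiniteMeasure μ] :
    ∀ᵐ x, ∃ Θ : ℝ, 0 ≤ Θ ∧ ∀ δ : ℝ, 0 < δ → ∀ᶠ r in 𝓝[>] (0 : ℝ), ∀ (z : V2) (ρ : ℝ), 0 ≤ ρ →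
      Metric.closedBall z ρ ⊆ Metric.closedBall x r →
      μ (Metric.closedBall z ρ) ≤ ENNReal.ofReal (δ * r ^ 2 + Θ * ρ ^ 2) := by
  set θ : V2 → ℝ := fun x => (μ.rnDeriv volume x).toReal with hθ
  have hθi : Integrable θ := Measure.integrable_toReal_rnDeriv
  filter_upwards [good_leb hθi, good_sing (μ.singularPart volume)
    (Measure.mutuallySingular_singularPart μ volume)] with x h1 h2
  refine ⟨4 * θ x, by positivity, fun δ hδ => ?_⟩
  filter_upwards [h1 (δ / 2) (by positivity), h2 (δ / 2) (by positivity)] with r hr1 hr2 z ρ hρ hsub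
  have hm := Measure.haveLebesgueDecomposition_add μ volume
  have hBm : MeasurableSet (Metric.closedBall z ρ) := Metric.isClosed_closedBall.measurableSet
  have hx0 : 0 ≤ θ x := ENNReal.toReal_nonneg
  calc μ (Metric.closedBall z ρ) = μ.singularPart volume (Metric.closedBall z ρ) +
        ∫⁻ y in Metric.closedBall z ρ, μ.rnDeriv volume y := by
        conv_lhs => rw [hm]
        rw [Measure.add_apply, withDensity_apply _ hBm]
    _ ≤ μ.singularPart volume (Metric.closedBall x r) +
        ∫⁻ y in Metric.closedBall z ρ, (‖θ y - θ x‖ₑ + ENNReal.ofReal (θ x)) := by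
        apply add_le_add (measure_mono hsub)
        apply lintegral_mono_ae
        filter_upwards [ae_restrict_of_ae (Measure.rnDeriv_lt_top μ volume)] with y hy
        rw [← ENNReal.ofReal_toReal hy.ne, ← ofReal_norm, ← ENNReal.ofReal_add (norm_nonneg _) hx0]
        apply ENNReal.ofReal_le_ofReal
        have := le_abs_self (θ y - θ x)
        rw [Real.norm_eq_abs]
        change θ y ≤ _
        linarith
    _ = μ.singularPart volume (Metric.closedBall x r) +
        ((∫⁻ y in Metric.closedBall z ρ, ‖θ y - θ x‖ₑ) + ENNReal.ofReal (4 * θ x * ρ ^ 2)) := by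
        rw [lintegral_add_right _ measurable_const, setLIntegral_const,
          Real.volume_pi_closedBall _ hρ, ← ENNReal.ofReal_mul hx0]
        have e : θ x * (2 * ρ) ^ Fintype.card (Fin 2) = 4 * θ x * ρ ^ 2 := by
          rw [Fintype.card_fin]; ring
        rw [e]
    _ ≤ ENNReal.ofReal (δ / 2 * r ^ 2) + (ENNReal.ofReal (δ / 2 * r ^ 2) +
        ENNReal.ofReal (4 * θ x * ρ ^ 2)) := by
        gcongr
        exact (lintegral_mono_set hsub).trans hr1
    _ = _ := by
        rw [← ENNReal.ofReal_add (by positivity) (by positivity),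
          ← ENNReal.ofReal_add (by positivity) (by positivity)]
        congr 1; ring

lemma exists_mu {Ω : Set V2} (hb : Bornology.IsBounded Ω) (D : ℕ → V2 → ℝ)
    (hD : ∀ n, IntegrableOn (D n) Ω) (hD0 : ∀ n x, 0 ≤ D n x) (C₀ : ℝ)
    (hC : ∀ n, ∫ x in Ω, D n x ≤ C₀) :
    ∃ (μ : Measure V2) (_ : IsFiniteMeasure μ), ∀ B : Set V2, IsClosed B → ∀ δ : ℝ, 0 < δ →
      ∀ᶠ n in (hyperfilter ℕ : Filter ℕ),
        ∫⁻ x in B ∩ Ω, ENNReal.ofReal (D n x) ≤ μ B + ENNReal.ofReal δ := by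
  have hlin : ∀ n, ∫⁻ x in Ω, ENNReal.ofReal (D n x) = ENNReal.ofReal (∫ x in Ω, D n x) :=
    fun n => (ofReal_integral_eq_lintegral_ofReal (hD n) (Eventually.of_forall (hD0 n))).symm
  set m : ℕ → Measure V2 := fun n => (volume.restrict Ω).withDensity fun x => ENNReal.ofReal (D n x)
    with hm
  have hfin : ∀ n, IsFiniteMeasure (m n) := fun n =>
    isFiniteMeasure_withDensity (by rw [hlin]; exact ENNReal.ofReal_ne_top)
  have hma : ∀ n B, MeasurableSet B → m n B = ∫⁻ x in B ∩ Ω, ENNReal.ofReal (D n x) := by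
    intro n B hB
    rw [hm]; dsimp only
    rw [withDensity_apply _ hB, Measure.restrict_restrict hB]
  set mf : ℕ → FiniteMeasure V2 := fun n => ⟨m n, hfin n⟩ with hmf
  have hcpt := isCompact_setOfPred_finiteMeasure_le_of_isCompact C₀.toNNReal hb.isCompact_closure
  have hmem : ∀ n, mf n ∈ {μ : FiniteMeasure V2 | μ.mass ≤ C₀.toNNReal ∧ μ (closure Ω)ᶜ = 0} := by
    intro n
    constructor
    · rw [← ENNReal.coe_le_coe, FiniteMeasure.ennreal_mass]
      change m n univ ≤ _
      rw [hma n univ MeasurableSet.univ, univ_inter, hlin]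
      exact ENNReal.ofReal_le_ofReal (hC n)
    · rw [← ENNReal.coe_eq_zero, FiniteMeasure.ennreal_coeFn_eq_coeFn_toMeasure]
      change m n _ = _
      rw [hma n _ isClosed_closure.isOpen_compl.measurableSet]
      have : (closure Ω)ᶜ ∩ Ω = ∅ := by
        ext x; simp only [mem_inter_iff, mem_compl_iff, mem_empty_iff_false, iff_false, not_and]
        exact fun h1 h2 => h1 (subset_closure h2)
      rw [this]; simp
  obtain ⟨μ, -, hμ⟩ := hcpt.ultrafilter_le_nhds (Ultrafilter.map mf (hyperfilter ℕ))
    (le_principal_iff.2 (by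
      change _ ∈ Filter.map mf _
      exact Filter.mem_map.2 (Filter.univ_mem' hmem)))
  have hμ' : Tendsto mf (hyperfilter ℕ : Filter ℕ) (𝓝 μ) := hμ
  refine ⟨μ, inferInstance, fun B hB δ hδ => ?_⟩
  have hl := FiniteMeasure.limsup_measure_closed_le_of_tendsto hμ' hB
  have hlt : (μ : Measure V2) B < (μ : Measure V2) B + ENNReal.ofReal δ :=
    ENNReal.lt_add_right (measure_ne_top _ _) (by simpa using hδ)
  filter_upwards [eventually_lt_of_limsup_lt (hl.trans_lt hlt)] with n hn
  have : (mf n : Measure V2) B = m n B := rfl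
  rw [this, hma n B hB.measurableSet] at hn
  exact hn.le

lemma abs_entry_le_mnorm (M : Mat2) (i j : Fin 2) : |M i j| ≤ mnorm M := by
  unfold mnorm
  apply Real.abs_le_sqrt
  simp only [Fin.sum_univ_two]
  fin_cases i <;> fin_cases j <;> simp <;> nlinarith [sq_nonneg (M 0 0), sq_nonneg (M 0 1), sq_nonneg (M 1 0), sq_nonneg (M 1 1)]

lemma mnorm_le (M : Mat2) : mnorm M ≤ |M 0 0| + |M 0 1| + |M 1 0| + |M 1 1| := by
  unfold mnorm
  apply Real.sqrt_le_iff.2 ⟨by positivity, ?_⟩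
  simp only [Fin.sum_univ_two]
  rw [← sq_abs (M 0 0), ← sq_abs (M 0 1), ← sq_abs (M 1 0), ← sq_abs (M 1 1)]
  have := abs_nonneg (M 0 0)
  have := abs_nonneg (M 0 1)
  have := abs_nonneg (M 1 0)
  have := abs_nonneg (M 1 1)
  nlinarith [mul_nonneg (abs_nonneg (M 0 0)) (abs_nonneg (M 0 1)),
    mul_nonneg (abs_nonneg (M 0 0)) (abs_nonneg (M 1 0)),
    mul_nonneg (abs_nonneg (M 0 0)) (abs_nonneg (M 1 1)),
    mul_nonneg (abs_nonneg (M 0 1)) (abs_nonneg (M 1 0)),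
    mul_nonneg (abs_nonneg (M 0 1)) (abs_nonneg (M 1 1)),
    mul_nonneg (abs_nonneg (M 1 0)) (abs_nonneg (M 1 1))]

lemma abs_le_vnorm (v : V2) (i : Fin 2) : |v i| ≤ vnorm v := by
  unfold vnorm
  apply Real.abs_le_sqrt
  fin_cases i <;> simp <;> positivity

lemma vnorm_le (v : V2) : vnorm v ≤ |v 0| + |v 1| := by
  unfold vnorm
  apply Real.sqrt_le_iff.2 ⟨by positivity, ?_⟩
  rw [← sq_abs (v 0), ← sq_abs (v 1)]
  nlinarith [mul_nonneg (abs_nonneg (v 0)) (abs_nonneg (v 1))]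

lemma mnorm_integrable {Ω : Set V2} {g : V2 → Mat2} (hg : IntegrableOnM g Ω) :
    IntegrableOn (fun x => mnorm (g x)) Ω := by
  refine Integrable.mono' (((((hg 0 0).abs).add (hg 0 1).abs).add (hg 1 0).abs).add (hg 1 1).abs)
    ?_ ?_
  · have : AEMeasurable (fun x => mnorm (g x)) (volume.restrict Ω) := by
      unfold mnorm
      apply Real.continuous_sqrt.measurable.comp_aemeasurable
      refine Finset.aemeasurable_fun_sum _ fun i _ => Finset.aemeasurable_fun_sum _ fun j _ => ?_
      exact (hg i j).aestronglyMeasurable.aemeasurable.pow_const 2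
    exact this.aestronglyMeasurable
  · filter_upwards with x
    exact (Real.norm_of_nonneg (show 0 ≤ mnorm (g x) from Real.sqrt_nonneg _)).trans_le (mnorm_le _)

lemma comp_integrable {Ω : Set V2} {u : V2 → V2} (hu : IntegrableOn u Ω) (i : Fin 2) :
    IntegrableOn (fun x => u x i) Ω :=
  (ContinuousLinearMap.proj (R := ℝ) (φ := fun _ : Fin 2 => ℝ) i).integrable_comp hu

lemma vnorm_integrable {Ω : Set V2} {u : V2 → V2} (hu : IntegrableOn u Ω) :
    IntegrableOn (fun x => vnorm (u x)) Ω := by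
  refine Integrable.mono' ((comp_integrable hu 0).abs.add (comp_integrable hu 1).abs) ?_ ?_
  · have hc : Continuous vnorm := by unfold vnorm; fun_prop
    exact hc.comp_aestronglyMeasurable hu.aestronglyMeasurable
  · filter_upwards with x
    exact (Real.norm_of_nonneg (show 0 ≤ vnorm (u x) from Real.sqrt_nonneg _)).trans_le (vnorm_le _)

lemma sob_SBV {Ω : Set V2} {u : V2 → V2} {gu : V2 → Mat2} (h : IsSobolev11On Ω u gu) (i : Fin 2) :
    SBV Ω (fun x => u x i) (fun j x => gu x i j) 0 0 := by
  refine ⟨comp_integrable h.int_u i, fun j => h.int_gu i j, inferInstance,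
    fun j => aemeasurable_zero_measure, fun j => by simp, ?_⟩
  intro φ h1 h2 h3 j
  rw [h.ibp φ h1 h2 h3 i j]; simp

lemma bv_SBV {Ω : Set V2} {u : V2 → V2} {gu : V2 → Mat2} {σ : Measure V2} {gs : V2 → Mat2}
    (h : HasBVDerivOn Ω u gu σ gs) (i : Fin 2) :
    SBV Ω (fun x => u x i) (fun j x => gu x i j) σ (fun j x => gs x i j) := by
  refine ⟨comp_integrable h.int_u i, fun j => h.int_gu i j, ⟨h.fin.lt_top⟩,
    fun j => h.meas_gs i j, fun j => ?_, fun φ h1 h2 h3 j => h.ibp φ h1 h2 h3 i j⟩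
  filter_upwards [h.unit] with x hx
  rw [← hx]; exact abs_entry_le_mnorm _ _ _

/-- reference bump -/
def psi : ContDiffBump (0 : V2) := ⟨1 / 2, 1, by norm_num, by norm_num⟩

/-- rescaled bump -/
def phr (x₀ : V2) (r : ℝ) (x : V2) : ℝ := psi (r⁻¹ • (x - x₀))

lemma phr_contDiff (x₀ : V2) (r : ℝ) : ContDiff ℝ (⊤ : ℕ∞) (phr x₀ r) := by
  unfold phr
  exact psi.contDiff.comp ((contDiff_id.sub contDiff_const).const_smul r⁻¹)

lemma phr_nonneg (x₀ : V2) (r : ℝ) (x : V2) : 0 ≤ phr x₀ r x := psi.nonneg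
lemma phr_le_one (x₀ : V2) (r : ℝ) (x : V2) : phr x₀ r x ≤ 1 := psi.le_one

lemma phr_supp (x₀ : V2) {r : ℝ} (hr : 0 < r) : tsupport (phr x₀ r) ⊆ Metric.closedBall x₀ r := by
  apply closure_minimal _ Metric.isClosed_closedBall
  intro x hx
  by_contra hcon
  apply hx
  unfold phr
  apply psi.zero_of_le_dist
  rw [Metric.mem_closedBall, not_le, dist_eq_norm] at hcon
  simp only [psi, dist_zero_right, norm_smul, norm_inv, Real.norm_of_nonneg hr.le]
  rw [inv_mul_eq_div, le_div_iff₀ hr]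
  linarith

lemma phr_pd : ∃ K : ℝ, 0 ≤ K ∧ ∀ (x₀ : V2) (r : ℝ), 0 < r → ∀ j x,
    |pd j (phr x₀ r) x| ≤ K / r := by
  have hc : ∀ j, Continuous (pd j psi) := fun j => continuous_pd psi.contDiff j
  have hcs : ∀ j, HasCompactSupport (pd j psi) := fun j =>
    psi.hasCompactSupport.mono' (fun x hx => by
      by_contra hcon
      exact hx (pd_notMem hcon j))
  choose M hM using fun j => (hc j).bounded_above_of_compact_support (hcs j)
  have hM0 : ∀ j, 0 ≤ M j := fun j => (norm_nonneg _).trans (hM j 0)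
  refine ⟨M 0 + M 1, add_nonneg (hM0 0) (hM0 1), fun x₀ r hr j x => ?_⟩
  have h1 : HasFDerivAt (psi : V2 → ℝ) (fderiv ℝ psi (r⁻¹ • (x - x₀))) (r⁻¹ • (x - x₀)) :=
    ((psi.contDiff (n := 1)).differentiable one_ne_zero _).hasFDerivAt
  have h2 : HasFDerivAt (fun y : V2 => r⁻¹ • (y - x₀)) (r⁻¹ • ContinuousLinearMap.id ℝ V2) x :=
    ((hasFDerivAt_id x).sub_const x₀).const_smul r⁻¹
  have e : pd j (phr x₀ r) x = r⁻¹ * pd j psi (r⁻¹ • (x - x₀)) := by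
    unfold pd
    rw [show fderiv ℝ (phr x₀ r) x = _ from (h1.comp x h2).fderiv]
    simp
  rw [e, abs_mul, abs_inv, abs_of_pos hr, inv_mul_eq_div]
  gcongr
  refine (hM j _).trans ?_
  fin_cases j
  · simpa using hM0 1
  · simpa using hM0 0

lemma phr_int (x₀ : V2) (r : ℝ) : ∫ x, phr x₀ r x = r ^ 2 * ∫ x, psi x := by
  unfold phr
  rw [integral_sub_right_eq_self (fun x : V2 => psi (r⁻¹ • x)) x₀, Measure.integral_comp_inv_smul]
  simp

lemma psi_int : 0 < ∫ x, psi x := psi.integral_pos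

lemma phr_compact (x₀ : V2) {r : ℝ} (hr : 0 < r) : HasCompactSupport (phr x₀ r) :=
  (isCompact_closedBall x₀ r).of_isClosed_subset (isClosed_tsupport _) (phr_supp x₀ hr)

lemma phr_zero (x₀ : V2) {r : ℝ} (hr : 0 < r) {x : V2} (hx : x ∉ Metric.closedBall x₀ r) :
    phr x₀ r x = 0 :=
  image_eq_zero_of_notMem_tsupport (fun h => hx (phr_supp x₀ hr h))

lemma phr_abs (x₀ : V2) (r : ℝ) (x : V2) : |phr x₀ r x| ≤ 1 := by
  rw [abs_of_nonneg (phr_nonneg _ _ _)]; exact phr_le_one _ _ _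

lemma phr_mul_int {Ω : Set V2} (x₀ : V2) (r : ℝ) {f : V2 → ℝ} (hf : IntegrableOn f Ω) :
    IntegrableOn (fun x => phr x₀ r x * f x) Ω :=
  hf.bdd_mul (c := 1) (phr_contDiff x₀ r).continuous.aestronglyMeasurable
    (Eventually.of_forall (phr_abs x₀ r))

lemma single_n {Ω : Set V2} (hΩ : IsOpen Ω) (hb : Bornology.IsBounded Ω)
    {u v : V2 → ℝ} {g vg : Fin 2 → V2 → ℝ}
    (hu : SBV Ω u g 0 0) (hv : SBV Ω v vg 0 0) {C : ℝ} (hC0 : 0 ≤ C)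
    (hC : ∀ᵐ x ∂(volume.restrict Ω), |g 0 x| ≤ C)
    (hC' : ∀ᵐ x ∂(volume.restrict Ω), |vg 0 x| ≤ C)
    (hdet : ∀ᵐ x ∂(volume.restrict Ω), g 0 x * vg 1 x - g 1 x * vg 0 x = 1)
    (x₀ : V2) {r ε : ℝ} (hr : 0 < r) (hε : 0 < ε) (hε2 : ε ≤ 1 / 2)
    (hx : Metric.closedBall x₀ (4 * r) ⊆ Ω) (c : ℝ) (a : Fin 2 → ℝ)
    (hA : ∫⁻ p in Metric.closedBall x₀ (2 * r), ‖u p - aff c a p‖ₑ ≤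
      ENNReal.ofReal (17 * ε ^ 3 * r ^ 3))
    {N T : ℝ} (hN : 0 ≤ N) (hT0 : 0 ≤ T)
    (hm : ∀ x ∈ Metric.closedBall x₀ r, ∫⁻ p in Metric.closedBall x (2 * (ε * r)), ‖g 1 p‖ₑ ≤
      ENNReal.ofReal (ε ^ 3 * r ^ 2 + N * (ε * r) ^ 2))
    (hT : ∀ j, ∫⁻ p in Metric.closedBall x₀ (2 * r), ‖vg j p‖ₑ ≤ ENNReal.ofReal (T * r ^ 2))
    {K : ℝ} (hK0 : 0 ≤ K) (hK : ∀ j x, |pd j (phr x₀ r) x| ≤ K / r) :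
    |r ^ 2 * (∫ x, psi x) - (a 0 * (∫ x in Ω, phr x₀ r x * vg 1 x) -
      a 1 * ∫ x in Ω, phr x₀ r x * vg 0 x)| ≤
      ε * r ^ 2 * ((2 * (C + |a 0|) + 17 / 4 + (1 + N + 16 * |a 1|) / 2) * K * (2 * T)) := by
  have hη : 0 < ε * r := by positivity
  have hw := hu.sub_aff hb c a
  have hle : r + 2 * (ε * r) ≤ 2 * r := by nlinarith
  have h24 : Metric.closedBall x₀ (2 * r) ⊆ Ω :=
    (Metric.closedBall_subset_closedBall (by linarith)).trans hx
  have hBr : Metric.closedBall x₀ r ⊆ Ω :=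
    (Metric.closedBall_subset_closedBall (by linarith)).trans hx
  have hCw : ∀ᵐ x ∂(volume.restrict Ω), |g 0 x - a 0| ≤ C + |a 0| := by
    filter_upwards [hC] with x hx
    exact (abs_sub _ _).trans (by linarith)
  have ha0 := abs_nonneg (a 0)
  have ha1 := abs_nonneg (a 1)
  have hsup := hw.sup_bound hΩ x₀ (r := r) (η := ε * r) (C := C + |a 0|) (A := 17 * ε ^ 3 * r ^ 3)
    (m := ε ^ 3 * r ^ 2 + N * (ε * r) ^ 2 + 16 * |a 1| * (ε * r) ^ 2) hη
    ((Metric.closedBall_subset_closedBall hle).trans h24) (by positivity) hCw (by positivity)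
    (by positivity) ((lintegral_mono_set (Metric.closedBall_subset_closedBall hle)).trans hA) (by
      intro x hxB
      calc ∫⁻ p in Metric.closedBall x (2 * (ε * r)), ‖g 1 p - a 1‖ₑ
          ≤ ∫⁻ p in Metric.closedBall x (2 * (ε * r)), (‖g 1 p‖ₑ + ENNReal.ofReal |a 1|) := by
            apply lintegral_mono
            intro p
            dsimp only
            refine (enorm_sub_le).trans ?_
            rw [← ofReal_norm (a 1), Real.norm_eq_abs]
        _ = (∫⁻ p in Metric.closedBall x (2 * (ε * r)), ‖g 1 p‖ₑ) +
            ENNReal.ofReal (16 * |a 1| * (ε * r) ^ 2) := by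
            rw [lintegral_add_right _ measurable_const, setLIntegral_const,
              Real.volume_pi_closedBall _ (by positivity), ← ENNReal.ofReal_mul ha1]
            have e : |a 1| * (2 * (2 * (ε * r))) ^ Fintype.card (Fin 2)
                = 16 * |a 1| * (ε * r) ^ 2 := by
              rw [Fintype.card_fin]; ring
            rw [e]
        _ ≤ _ := by
            rw [ENNReal.ofReal_add (p := ε ^ 3 * r ^ 2 + N * (ε * r) ^ 2) (by positivity)
              (by positivity)]
            gcongr
            exact hm x hxB)
  set K₁ := 2 * (C + |a 0|) + 17 / 4 + (1 + N + 16 * |a 1|) / 2 with hK₁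
  have hK₁0 : 0 ≤ K₁ := by positivity
  have hS : ∀ᵐ x, x ∈ Metric.closedBall x₀ r → |u x - aff c a x| ≤ r * ε * K₁ := by
    filter_upwards [hsup] with x hxs hxB
    have h1 := hxs hxB
    have h2 : 4 * (ε * r) ^ 2 * |u x - aff c a x| ≤ 4 * (ε * r) ^ 2 * (r * ε * K₁) := by
      refine h1.trans ?_
      have : 0 ≤ ε ^ 3 * r ^ 3 * (1 - ε) := by
        have : 0 ≤ 1 - ε := by linarith
        positivity
      rw [hK₁]
      nlinarith
    exact le_of_mul_le_mul_left h2 (by positivity)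
  have hkey := key_lemma hΩ hw hv x₀ (r := r) (S := r * ε * K₁) (K := K / r) (C := C + |a 0|)
    (C' := C) (T := T * r ^ 2) hr h24 (by positivity) hCw hC0 hC' (by positivity) hS
    (phr_contDiff x₀ r) (phr_supp x₀ hr) (by positivity) hK (by positivity) hT
  have e1 : ∫ x in Ω, phr x₀ r x * ((g 0 x - a 0) * vg 1 x - (g 1 x - a 1) * vg 0 x) =
      r ^ 2 * (∫ x, psi x) - (a 0 * (∫ x in Ω, phr x₀ r x * vg 1 x) -
      a 1 * ∫ x in Ω, phr x₀ r x * vg 0 x) := by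
    have i0 := (phr_mul_int x₀ r (hv.int_g 0)).const_mul (a 1)
    have i1 := (phr_mul_int x₀ r (hv.int_g 1)).const_mul (a 0)
    have i2 : IntegrableOn (fun x => a 0 * (phr x₀ r x * vg 1 x) - a 1 * (phr x₀ r x * vg 0 x)) Ω :=
      i1.sub i0
    have ip : IntegrableOn (phr x₀ r) Ω :=
      ((phr_contDiff x₀ r).continuous.integrable_of_hasCompactSupport
        (phr_compact x₀ hr)).integrableOn
    rw [← phr_int x₀ r, ← setIntegral_eq_of_zero (Ω := Ω) (F := phr x₀ r)
      (fun x hxΩ => phr_zero x₀ hr (fun h => hxΩ (hBr h))), ← integral_const_mul,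
      ← integral_const_mul, ← integral_sub i1 i0, ← integral_sub ip i2]
    apply integral_congr_ae
    filter_upwards [hdet] with x hx
    linear_combination phr x₀ r x * hx
  rw [e1] at hkey
  refine hkey.trans (le_of_eq ?_)
  field_simp
  ring

lemma lin_term {Ω : Set V2} {u v : V2 → ℝ} {g vg : Fin 2 → V2 → ℝ} {σ : Measure V2}
    {s : Fin 2 → V2 → ℝ} (hu : SBV Ω u g σ s) (hv : SBV Ω v vg 0 0) (x₀ : V2) {r : ℝ} (hr : 0 < r)
    (hx : Metric.closedBall x₀ r ⊆ Ω) (j : Fin 2) (l : ℝ) {e τ K : ℝ} (he : 0 ≤ e) (hK0 : 0 ≤ K)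
    (hK : ∀ j x, |pd j (phr x₀ r) x| ≤ K / r)
    (h1 : ∫⁻ p in Metric.closedBall x₀ r, ‖g j p - l‖ₑ ≤ ENNReal.ofReal e)
    (h2 : σ (Metric.closedBall x₀ r) ≤ ENNReal.ofReal e)
    (h3 : ∫ x in Ω, |v x - u x| ≤ τ) :
    |(∫ x in Ω, phr x₀ r x * vg j x) - l * (r ^ 2 * ∫ x, psi x)| ≤ K / r * τ + 2 * e := by
  have := hu.fin
  have hφ := phr_contDiff x₀ r
  have hcs := phr_compact x₀ hr
  have hsub := (phr_supp x₀ hr).trans hx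
  have Iv := hv.ibp _ hφ hcs hsub j
  have Iu := hu.ibp _ hφ hcs hsub j
  simp only [integral_zero_measure, sub_zero] at Iv
  have hpc : Continuous (pd j (phr x₀ r)) := continuous_pd (hφ.of_le (by exact_mod_cast le_top)) j
  have iu : IntegrableOn (fun x => u x * pd j (phr x₀ r) x) Ω :=
    hu.int_f.mul_bdd (c := K / r) hpc.aestronglyMeasurable (Eventually.of_forall (hK j))
  have iv : IntegrableOn (fun x => v x * pd j (phr x₀ r) x) Ω :=
    hv.int_f.mul_bdd (c := K / r) hpc.aestronglyMeasurable (Eventually.of_forall (hK j))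
  have ip : IntegrableOn (phr x₀ r) Ω :=
    ((hφ.continuous.integrable_of_hasCompactSupport hcs)).integrableOn
  have b1 : |(∫ x in Ω, v x * pd j (phr x₀ r) x) - ∫ x in Ω, u x * pd j (phr x₀ r) x| ≤
      K / r * τ := by
    rw [← integral_sub iv iu, ← Real.norm_eq_abs]
    calc _ ≤ ∫ x in Ω, K / r * |v x - u x| := by
          apply norm_integral_le_of_norm_le (((hv.int_f.sub hu.int_f).abs).const_mul _)
          filter_upwards with x
          rw [Real.norm_eq_abs, ← sub_mul, abs_mul, mul_comm]
          exact mul_le_mul_of_nonneg_right (hK j x) (abs_nonneg _)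
      _ ≤ K / r * τ := by
          rw [integral_const_mul]
          gcongr
  have b2 : |(∫ x in Ω, phr x₀ r x * g j x) - l * (r ^ 2 * ∫ x, psi x)| ≤ e := by
    rw [← phr_int x₀ r, ← setIntegral_eq_of_zero (Ω := Ω) (F := phr x₀ r)
      (fun x hxΩ => phr_zero x₀ hr (fun h => hxΩ (hx h))), ← integral_const_mul,
      ← integral_sub (phr_mul_int x₀ r (hu.int_g j)) (ip.const_mul l)]
    have e2 : ∫ x in Ω, (phr x₀ r x * g j x - l * phr x₀ r x) =
        ∫ x in Metric.closedBall x₀ r, (phr x₀ r x * g j x - l * phr x₀ r x) := by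
      have hz : ∀ x, x ∉ Metric.closedBall x₀ r → phr x₀ r x * g j x - l * phr x₀ r x = 0 := by
        intro x hx; rw [phr_zero x₀ hr hx]; ring
      rw [setIntegral_eq_of_zero hz, setIntegral_eq_of_zero (fun x hxΩ => hz x fun h => hxΩ (hx h))]
    rw [e2, ← Real.norm_eq_abs]
    have e3 := enorm_integral_le_lintegral_enorm (μ := volume.restrict (Metric.closedBall x₀ r))
      (fun x => phr x₀ r x * g j x - l * phr x₀ r x)
    have e4 : ∫⁻ x in Metric.closedBall x₀ r, ‖phr x₀ r x * g j x - l * phr x₀ r x‖ₑ ≤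
        ENNReal.ofReal e := by
      refine le_trans (lintegral_mono fun x => ?_) h1
      rw [← ofReal_norm, ← ofReal_norm]
      apply ENNReal.ofReal_le_ofReal
      rw [show phr x₀ r x * g j x - l * phr x₀ r x = phr x₀ r x * (g j x - l) by ring, norm_mul]
      calc _ ≤ 1 * ‖g j x - l‖ := by
            gcongr
            exact phr_abs x₀ r x
        _ = _ := one_mul _
    have e5 := e3.trans e4
    rw [← ofReal_norm] at e5
    exact (ENNReal.ofReal_le_ofReal_iff he).1 e5
  have b3 : |∫ x, phr x₀ r x * s j x ∂σ| ≤ e := by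
    have e3 := enorm_integral_le_lintegral_enorm (μ := σ) (fun x => phr x₀ r x * s j x)
    have e4 : ∫⁻ x, ‖phr x₀ r x * s j x‖ₑ ∂σ ≤ ENNReal.ofReal e := by
      refine le_trans ?_ h2
      rw [← lintegral_indicator_one Metric.isClosed_closedBall.measurableSet]
      apply lintegral_mono_ae
      filter_upwards [hu.bd j] with x hxs
      by_cases hxB : x ∈ Metric.closedBall x₀ r
      · rw [indicator_of_mem hxB, ← ofReal_norm, Pi.one_apply, ENNReal.ofReal_le_one,
          Real.norm_eq_abs, abs_mul]
        exact mul_le_one₀ (phr_abs x₀ r x) (abs_nonneg _) hxs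
      · rw [phr_zero x₀ hr hxB]; simp
    have e5 := e3.trans e4
    rw [← ofReal_norm] at e5
    exact (ENNReal.ofReal_le_ofReal_iff he).1 e5
  rw [abs_le] at *
  constructor <;> linarith [b1.1, b1.2, b2.1, b2.2, b3.1, b3.2]

lemma mnorm_nonneg (M : Mat2) : 0 ≤ mnorm M := Real.sqrt_nonneg _
lemma vnorm_nonneg (v : V2) : 0 ≤ vnorm v := Real.sqrt_nonneg _

lemma enorm_entry_le (M : Mat2) (i j : Fin 2) : ‖M i j‖ₑ ≤ ENNReal.ofReal (mnorm M) := by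
  rw [← ofReal_norm, Real.norm_eq_abs]
  exact ENNReal.ofReal_le_ofReal (abs_entry_le_mnorm M i j)

lemma L1_close {Ω : Set V2} {v u : V2 → V2} (hv : IntegrableOn v Ω) (hu : IntegrableOn u Ω)
    (i : Fin 2) : ∫ x in Ω, |v x i - u x i| ≤ ∫ x in Ω, vnorm (v x - u x) := by
  apply integral_mono ((comp_integrable hv i).sub (comp_integrable hu i)).abs
    (vnorm_integrable (hv.sub hu))
  intro x
  exact abs_le_vnorm (v x - u x) i

lemma final_eps {Ω : Set V2} (hΩ : IsOpen Ω) (hb : Bornology.IsBounded Ω)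
    {un : ℕ → V2 → V2} {gn : ℕ → V2 → Mat2}
    (hW11 : ∀ n, IsSobolev11On Ω (un n) (gn n))
    (hdet : ∀ n, ∀ᵐ x ∂(volume.restrict Ω), (gn n x).det = 1)
    {C : ℝ} (hC0 : 0 ≤ C)
    (hC : ∀ n i, ∀ᵐ x ∂(volume.restrict Ω), |gn n x i 0| ≤ C)
    {u : V2 → V2} {gu : V2 → Mat2} {σ : Measure V2} {gs : V2 → Mat2}
    (hu : HasBVDerivOn Ω u gu σ gs) (hL1 : L1ConvOn Ω un u)
    {μ : Measure V2}
    (hμ : ∀ B, IsClosed B → ∀ δ : ℝ, 0 < δ → ∀ᶠ n in (hyperfilter ℕ : Filter ℕ),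
      ∫⁻ x in B ∩ Ω, ENNReal.ofReal (mnorm (gn n x)) ≤ μ B + ENNReal.ofReal δ)
    {K : ℝ} (hK0 : 0 ≤ K) (hK : ∀ (x₀ : V2) (r : ℝ), 0 < r → ∀ j x, |pd j (phr x₀ r) x| ≤ K / r)
    (x₀ : V2) {r ε Θ : ℝ} (hr : 0 < r) (hε : 0 < ε) (hε2 : ε ≤ 1 / 2) (hΘ : 0 ≤ Θ)
    (hx : Metric.closedBall x₀ (4 * r) ⊆ Ω) (L : Mat2)
    (hg : ∀ i j, ∫⁻ y in Metric.closedBall x₀ (4 * r), ‖gu y i j - L i j‖ₑ ≤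
      ENNReal.ofReal (ε ^ 3 * r ^ 2))
    (hσ : σ (Metric.closedBall x₀ (4 * r)) ≤ ENNReal.ofReal (ε ^ 3 * r ^ 2))
    (hM : ∀ z ρ, 0 ≤ ρ → Metric.closedBall z ρ ⊆ Metric.closedBall x₀ (4 * r) →
      μ (Metric.closedBall z ρ) ≤ ENNReal.ofReal (ε ^ 3 * r ^ 2 + Θ * ρ ^ 2)) :
    |1 - L.det| * (∫ x, psi x) ≤ ε * ((2 * (C + |L 0 0|) + 17 / 4 +
      (1 + (9 * Θ + 1) + 16 * |L 0 1|) / 2) * K * (2 * (2 + 4 * Θ)) +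
      (|L 0 0| + |L 0 1|) * (K + 2)) := by
  have hη : 0 < ε * r := by positivity
  have sub (s : ℝ) (hs : s ≤ 4 * r) : Metric.closedBall x₀ s ⊆ Metric.closedBall x₀ (4 * r) :=
    Metric.closedBall_subset_closedBall hs
  have he3 : ε ^ 3 ≤ ε := by nlinarith [mul_pos hε hε, sq_nonneg ε]
  -- Poincare
  have e4 : 2 * (2 * r) = 4 * r := by ring
  obtain ⟨c, hc⟩ := ((bv_SBV hu 0).sub_aff hb 0 (L 0)).poincare hΩ x₀ (r := 2 * r) (by positivity)
    (by rw [e4]; exact hx)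
  rw [e4] at hc
  have hc2 : ∫⁻ p in Metric.closedBall x₀ (2 * r), ‖u p 0 - aff c (L 0) p‖ₑ ≤
      ENNReal.ofReal (16 * ε ^ 3 * r ^ 3) := by
    calc _ = ∫⁻ p in Metric.closedBall x₀ (2 * r), ‖u p 0 - aff 0 (L 0) p - c‖ₑ := by
          congr 1; ext p; congr 1; unfold aff; ring
      _ ≤ _ := hc
      _ ≤ ENNReal.ofReal (4 * r) * (ENNReal.ofReal (ε ^ 3 * r ^ 2) + ENNReal.ofReal (ε ^ 3 * r ^ 2)
          + 2 * ENNReal.ofReal (ε ^ 3 * r ^ 2)) := by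
          gcongr
          · exact hg 0 0
          · exact hg 0 1
      _ = _ := by
          rw [show (2 : ℝ≥0∞) = ENNReal.ofReal 2 by simp, ← ENNReal.ofReal_mul (by positivity),
            ← ENNReal.ofReal_add (by positivity) (by positivity),
            ← ENNReal.ofReal_add (by positivity) (by positivity),
            ← ENNReal.ofReal_mul (by positivity)]
          congr 1; ring
  -- net
  obtain ⟨t, ht, htf, hcov⟩ := (isCompact_closedBall x₀ r).finite_cover_balls hη
  have ev1 : ∀ᶠ n in (hyperfilter ℕ : Filter ℕ), ∀ z ∈ t,
      ∫⁻ x in Metric.closedBall z (3 * (ε * r)) ∩ Ω, ENNReal.ofReal (mnorm (gn n x)) ≤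
      μ (Metric.closedBall z (3 * (ε * r))) + ENNReal.ofReal ((ε * r) ^ 2) := by
    rw [htf.eventually_all]
    intro z hz
    exact hμ _ Metric.isClosed_closedBall _ (by positivity)
  have ev2 := hμ (Metric.closedBall x₀ (2 * r)) Metric.isClosed_closedBall (r ^ 2) (by positivity)
  have ev3 : ∀ᶠ n in (hyperfilter ℕ : Filter ℕ), ∫ x in Ω, vnorm (un n x - u x) < ε ^ 3 * r ^ 3 :=
    Nat.hyperfilter_le_atTop (Tendsto.eventually_lt_const (by positivity) hL1)
  obtain ⟨n, ⟨h1, h2⟩, h3⟩ := ((ev1.and ev2).and ev3).exists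
  have hτ (i : Fin 2) : ∫ x in Ω, |un n x i - u x i| ≤ ε ^ 3 * r ^ 3 :=
    (L1_close (hW11 n).int_u hu.int_u i).trans h3.le
  have S0 := sob_SBV (hW11 n) 0
  have S1 := sob_SBV (hW11 n) 1
  have hA : ∫⁻ p in Metric.closedBall x₀ (2 * r), ‖un n p 0 - aff c (L 0) p‖ₑ ≤
      ENNReal.ofReal (17 * ε ^ 3 * r ^ 3) := by
    have i0 : IntegrableOn (fun x => un n x 0 - u x 0) Ω :=
      S0.int_f.sub (comp_integrable hu.int_u 0)
    have hB : Metric.closedBall x₀ (2 * r) ⊆ Ω := (sub _ (by linarith)).trans hx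
    calc _ ≤ ∫⁻ p in Metric.closedBall x₀ (2 * r),
          (‖un n p 0 - u p 0‖ₑ + ‖u p 0 - aff c (L 0) p‖ₑ) := by
          apply lintegral_mono; intro p; dsimp only
          rw [← sub_add_sub_cancel (un n p 0) (u p 0)]
          exact enorm_add_le _ _
      _ = (∫⁻ p in Metric.closedBall x₀ (2 * r), ‖un n p 0 - u p 0‖ₑ) +
          ∫⁻ p in Metric.closedBall x₀ (2 * r), ‖u p 0 - aff c (L 0) p‖ₑ :=
          lintegral_add_left' ((i0.mono_set hB).aestronglyMeasurable.enorm) _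
      _ ≤ ENNReal.ofReal (ε ^ 3 * r ^ 3) + ENNReal.ofReal (16 * ε ^ 3 * r ^ 3) := by
          gcongr
          refine (lintegral_mono_set hB).trans ?_
          rw [← ofReal_integral_norm_eq_lintegral_enorm i0]
          exact ENNReal.ofReal_le_ofReal (hτ 0)
      _ = _ := by
          rw [← ENNReal.ofReal_add (by positivity) (by positivity)]
          congr 1; ring
  have hm : ∀ x ∈ Metric.closedBall x₀ r, ∫⁻ p in Metric.closedBall x (2 * (ε * r)), ‖gn n p 0 1‖ₑ ≤
      ENNReal.ofReal (ε ^ 3 * r ^ 2 + (9 * Θ + 1) * (ε * r) ^ 2) := by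
    intro x hxB
    obtain ⟨z, hz, hxz⟩ := mem_iUnion₂.1 (hcov hxB)
    have hz0 := ht hz
    rw [Metric.mem_ball] at hxz
    rw [Metric.mem_closedBall] at hz0
    have s1 : Metric.closedBall x (2 * (ε * r)) ⊆ Metric.closedBall z (3 * (ε * r)) :=
      Metric.closedBall_subset_closedBall' (by linarith)
    have s2 : Metric.closedBall z (3 * (ε * r)) ⊆ Metric.closedBall x₀ (4 * r) :=
      Metric.closedBall_subset_closedBall' (by nlinarith)
    calc _ ≤ ∫⁻ p in Metric.closedBall z (3 * (ε * r)) ∩ Ω, ENNReal.ofReal (mnorm (gn n p)) :=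
          (lintegral_mono (fun p => enorm_entry_le _ _ _)).trans
            (lintegral_mono_set (subset_inter s1 (s1.trans (s2.trans hx))))
      _ ≤ _ := h1 z hz
      _ ≤ ENNReal.ofReal (ε ^ 3 * r ^ 2 + Θ * (3 * (ε * r)) ^ 2) + ENNReal.ofReal ((ε * r) ^ 2) := by
          gcongr
          exact hM _ _ (by positivity) s2
      _ = _ := by
          rw [← ENNReal.ofReal_add (by positivity) (by positivity)]
          congr 1; ring
  have hT : ∀ j, ∫⁻ p in Metric.closedBall x₀ (2 * r), ‖gn n p 1 j‖ₑ ≤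
      ENNReal.ofReal ((2 + 4 * Θ) * r ^ 2) := by
    intro j
    have s2 := sub (2 * r) (by linarith)
    calc _ ≤ ∫⁻ p in Metric.closedBall x₀ (2 * r) ∩ Ω, ENNReal.ofReal (mnorm (gn n p)) :=
          (lintegral_mono (fun p => enorm_entry_le _ _ _)).trans
            (lintegral_mono_set (subset_inter subset_rfl (s2.trans hx)))
      _ ≤ _ := h2
      _ ≤ ENNReal.ofReal (ε ^ 3 * r ^ 2 + Θ * (2 * r) ^ 2) + ENNReal.ofReal (r ^ 2) := by
          gcongr
          exact hM _ _ (by positivity) s2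
      _ ≤ _ := by
          rw [← ENNReal.ofReal_add (by positivity) (by positivity)]
          apply ENNReal.ofReal_le_ofReal
          nlinarith [mul_nonneg (show 0 ≤ 1 - ε ^ 3 by linarith) (sq_nonneg r)]
  have hs := single_n hΩ hb S0 S1 hC0 (hC n 0) (hC n 1)
    (by filter_upwards [hdet n] with x hx; rw [← hx, Matrix.det_fin_two]) x₀ hr hε hε2 hx c (L 0)
    hA (N := 9 * Θ + 1) (T := 2 + 4 * Θ) (by positivity) (by positivity) hm hT hK0 (hK x₀ r hr)
  have s1 := sub r (by linarith)
  have hl (j : Fin 2) := lin_term (bv_SBV hu 1) S1 x₀ hr (s1.trans hx) j (L 1 j)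
    (e := ε ^ 3 * r ^ 2) (by positivity) hK0 (hK x₀ r hr)
    ((lintegral_mono_set s1).trans (hg 1 j)) ((measure_mono s1).trans hσ) (hτ 1)
  have hl2 (j : Fin 2) : |(∫ x in Ω, phr x₀ r x * gn n x 1 j) - L 1 j * (r ^ 2 * ∫ x, psi x)| ≤
      (K + 2) * (ε * r ^ 2) := by
    refine (hl j).trans ?_
    have : K / r * (ε ^ 3 * r ^ 3) + 2 * (ε ^ 3 * r ^ 2) = (K + 2) * (ε ^ 3 * r ^ 2) := by
      field_simp
    rw [this]
    gcongr
  set X0 := ∫ x in Ω, phr x₀ r x * gn n x 1 0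
  set X1 := ∫ x in Ω, phr x₀ r x * gn n x 1 1
  set I := ∫ x, psi x
  have hI : 0 < I := psi_int
  set K2 := (2 * (C + |L 0 0|) + 17 / 4 +
      (1 + (9 * Θ + 1) + 16 * |L 0 1|) / 2) * K * (2 * (2 + 4 * Θ))
  have hr2 : 0 < r ^ 2 := by positivity
  have a1 : |L 0 0 * (X1 - L 1 1 * (r ^ 2 * I))| ≤ |L 0 0| * ((K + 2) * (ε * r ^ 2)) := by
    rw [abs_mul]; exact mul_le_mul_of_nonneg_left (hl2 1) (abs_nonneg _)
  have a0 : |L 0 1 * (X0 - L 1 0 * (r ^ 2 * I))| ≤ |L 0 1| * ((K + 2) * (ε * r ^ 2)) := by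
    rw [abs_mul]; exact mul_le_mul_of_nonneg_left (hl2 0) (abs_nonneg _)
  have key : |(1 - L.det) * (r ^ 2 * I)| ≤
      ε * r ^ 2 * K2 + |L 0 0| * ((K + 2) * (ε * r ^ 2)) + |L 0 1| * ((K + 2) * (ε * r ^ 2)) := by
    have : (1 - L.det) * (r ^ 2 * I) = (r ^ 2 * I - (L 0 0 * X1 - L 0 1 * X0)) +
      L 0 0 * (X1 - L 1 1 * (r ^ 2 * I)) - L 0 1 * (X0 - L 1 0 * (r ^ 2 * I)) := by
      rw [Matrix.det_fin_two]; ring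
    rw [this]
    refine (abs_sub _ _).trans (add_le_add ((abs_add_le _ _).trans (add_le_add hs a1)) a0)
  rw [abs_mul, abs_of_pos (by positivity : 0 < r ^ 2 * I)] at key
  refine le_of_mul_le_mul_left (a := r ^ 2) ?_ hr2
  calc _ = |1 - L.det| * (r ^ 2 * I) := by ring
    _ ≤ _ := key
    _ = _ := by ring

/-- Lemma 4.2: weak continuity of Jacobian determinants.
If `(u_ε) ⊂ W^{1,1}(Ω;ℝ²)` is uniformly bounded in `W^{1,1}`, satisfies `det ∇u_ε = 1` a.e.
and `‖∂₁u_ε‖_{L^∞} ≤ C`, and `u_ε → u` in `L¹(Ω;ℝ²)` for some `u ∈ BV(Ω;ℝ²)`, then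
`det ∇u = 1` a.e. in `Ω`, where `∇u` is the approximate differential of `u`. -/
theorem weak_continuity_jacobian
    (Ω : Set V2) (hΩlip : IsLipschitzDomain Ω)
    (un : ℕ → V2 → V2) (gn : ℕ → V2 → Mat2)
    (hW11 : ∀ n, IsSobolev11On Ω (un n) (gn n))
    (C₀ : ℝ)
    (hbdW11 : ∀ n, (∫ x in Ω, vnorm (un n x)) + (∫ x in Ω, mnorm (gn n x)) ≤ C₀)
    (hdet : ∀ n, ∀ᵐ x ∂(volume.restrict Ω), (gn n x).det = 1)
    (C : ℝ)
    (hC : ∀ n, ∀ᵐ x ∂(volume.restrict Ω), vnorm ((gn n x).mulVec e1) ≤ C)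
    (u : V2 → V2) (gu : V2 → Mat2) (σ : Measure V2) (gs : V2 → Mat2)
    (hu : HasBVDerivOn Ω u gu σ gs)
    (hL1 : L1ConvOn Ω un u) :
    ∀ᵐ x ∂(volume.restrict Ω), (gu x).det = 1 := by
  obtain ⟨hΩ, -, hb, -⟩ := hΩlip
  obtain ⟨K, hK0, hK⟩ := phr_pd
  obtain ⟨μ, hμf, hμ⟩ := exists_mu hb (fun n x => mnorm (gn n x))
    (fun n => mnorm_integrable (hW11 n).int_gu) (fun n x => mnorm_nonneg _) C₀ (fun n => by
      have := hbdW11 n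
      have h0 : 0 ≤ ∫ x in Ω, vnorm (un n x) := integral_nonneg (fun x => vnorm_nonneg _)
      linarith)
  have hC2 : ∀ n i, ∀ᵐ x ∂(volume.restrict Ω), |gn n x i 0| ≤ |C| := by
    intro n i
    filter_upwards [hC n] with x hx
    have h1 := abs_le_vnorm ((gn n x).mulVec e1) i
    have h2 : (gn n x).mulVec e1 i = gn n x i 0 := by
      simp [Matrix.mulVec, dotProduct, e1, Fin.sum_univ_two]
    rw [h2] at h1
    exact h1.trans (hx.trans (le_abs_self C))
  have hσf : IsFiniteMeasure σ := ⟨hu.fin.lt_top⟩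
  have hleb : ∀ᵐ x, ∀ i j, ∀ δ : ℝ, 0 < δ → ∀ᶠ r in 𝓝[>] (0 : ℝ),
      ∫⁻ y in Metric.closedBall x r, ‖Ω.indicator (fun z => gu z i j) y -
        Ω.indicator (fun z => gu z i j) x‖ₑ ≤ ENNReal.ofReal (δ * r ^ 2) := by
    rw [ae_all_iff]; intro i
    rw [ae_all_iff]; intro j
    exact good_leb ((integrable_indicator_iff hΩ.measurableSet).2 (hu.int_gu i j))
  rw [ae_restrict_iff' hΩ.measurableSet]
  filter_upwards [hleb, good_sing σ hu.perp, good_mu μ] with x₀ g1 g2 g3 hx₀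
  obtain ⟨Θ, hΘ, g3⟩ := g3
  obtain ⟨ρ₀, hρ₀, hball⟩ := Metric.isOpen_iff.1 hΩ x₀ hx₀
  set L := gu x₀ with hL
  obtain ⟨K₃, hK₃⟩ : ∃ K₃ : ℝ, K₃ = ((2 * (|C| + |L 0 0|) + 17 / 4 +
      (1 + (9 * Θ + 1) + 16 * |L 0 1|) / 2) * K * (2 * (2 + 4 * Θ)) +
      (|L 0 0| + |L 0 1|) * (K + 2)) := ⟨_, rfl⟩
  have main : ∀ ε : ℝ, 0 < ε → ε ≤ 1 / 2 → |1 - L.det| * (∫ x, psi x) ≤ ε * K₃ := by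
    intro ε hε hε2
    have hδ : 0 < ε ^ 3 / 16 := by positivity
    have ev1 : ∀ᶠ r in 𝓝[>] (0 : ℝ), ∀ i j, ∫⁻ y in Metric.closedBall x₀ r,
        ‖Ω.indicator (fun z => gu z i j) y - Ω.indicator (fun z => gu z i j) x₀‖ₑ ≤
        ENNReal.ofReal (ε ^ 3 / 16 * r ^ 2) := by
      rw [eventually_all]; intro i
      rw [eventually_all]; intro j
      exact g1 i j _ hδ
    have ev4 : ∀ᶠ r in 𝓝[>] (0 : ℝ), r ∈ Ioo 0 ρ₀ := Ioo_mem_nhdsGT hρ₀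
    obtain ⟨R, ⟨⟨e1, e2⟩, e3⟩, hR0, hR1⟩ := (((ev1.and (g2 _ hδ)).and (g3 _ hδ)).and ev4).exists
    obtain ⟨r, rfl⟩ : ∃ r, R = 4 * r := ⟨R / 4, by ring⟩
    have hr : 0 < r := by linarith
    have hxΩ : Metric.closedBall x₀ (4 * r) ⊆ Ω :=
      (Metric.closedBall_subset_ball hR1).trans hball
    have eδ : ε ^ 3 / 16 * (4 * r) ^ 2 = ε ^ 3 * r ^ 2 := by ring
    rw [eδ] at e2
    simp only [eδ] at e1 e3
    rw [hK₃]
    refine final_eps hΩ hb hW11 hdet (abs_nonneg C) hC2 hu hL1 hμ hK0 hK x₀ hr hε hε2 hΘ hxΩ L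
      ?_ e2 e3
    intro i j
    refine le_trans (le_of_eq ?_) (e1 i j)
    apply setLIntegral_congr_fun Metric.isClosed_closedBall.measurableSet
    intro y hy
    simp only [indicator_of_mem (hxΩ hy), indicator_of_mem hx₀, hL]
  have hI := psi_int
  by_contra hne
  have hpos : 0 < |1 - L.det| * (∫ x, psi x) :=
    mul_pos (abs_pos.2 (fun h => hne (by linarith))) hI
  have hlim : Tendsto (fun ε : ℝ => ε * K₃) (𝓝[>] 0) (𝓝 0) := by
    have : Tendsto (fun ε : ℝ => ε * K₃) (𝓝 0) (𝓝 (0 * K₃)) := tendsto_id.mul_const K₃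
    rw [zero_mul] at this
    exact this.mono_left nhdsWithin_le_nhds
  have ev : ∀ᶠ ε in 𝓝[>] (0 : ℝ), ε ∈ Ioo (0 : ℝ) (1 / 2) := Ioo_mem_nhdsGT (by norm_num)
  obtain ⟨ε, h1, h2, h3⟩ := ((hlim.eventually_lt_const hpos).and ev).exists
  exact absurd (main ε h2 h3.le) (not_le.2 h1)
end
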